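/- There exist 13 pairwise non-isomorphic projective planes of order 16 each of which contains a unital. -/

import Mathlib

/-- A finite projective plane: any two distinct points lie on a unique common line,
any two distinct lines meet in a unique common point, and there exist four points
no three of which are collinear. -/
structure ProjPlane where
  Point : Type
  Line : Type
  Incid : Point → Line → Prop
  finite_point : Finite Point
  finite_line : Finite Line
  exists_unique_line : ∀ p q : Point, p ≠ q → ∃! l : Line, Incid p l ∧ Incid q l
  exists_unique_point : ∀ l m : Line, l ≠ m → ∃! p : Point, Incid p l ∧ Incid p m
  nondegenerate : ∃ f : Fin 4 → Point, Function.Injective f ∧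
    ∀ l : Line, ∀ i j k : Fin 4, i ≠ j → i ≠ k → j ≠ k →
      ¬(Incid (f i) l ∧ Incid (f j) l ∧ Incid (f k) l)

/-- The plane has order `n`: every line contains exactly `n + 1` points. -/
def ProjPlane.HasOrder (Pl : ProjPlane) (n : ℕ) : Prop :=
  ∀ l : Pl.Line, {p : Pl.Point | Pl.Incid p l}.ncard = n + 1

/-- A unital in a plane of order `q ^ 2`: a set of `q ^ 3 + 1` points meeting every
line in exactly `1` or exactly `q + 1` points. -/
def ProjPlane.IsUnital (Pl : ProjPlane) (q : ℕ) (U : Set Pl.Point) : Prop :=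
  U.ncard = q ^ 3 + 1 ∧
    ∀ l : Pl.Line,
      (U ∩ {p | Pl.Incid p l}).ncard = 1 ∨ (U ∩ {p | Pl.Incid p l}).ncard = q + 1
/-- An isomorphism of projective planes: a bijection between the point sets carrying
lines to lines. -/
def PlaneIso (P1 P2 : ProjPlane) : Prop :=
  ∃ f : P1.Point ≃ P2.Point, ∀ l : P1.Line, ∃ m : P2.Line,
    ⇑f '' {p | P1.Incid p l} = {p | P2.Incid p m}

/-!
The planes are translation planes of spread sets over `𝔽₂⁴` and duals of such planes. They are told
apart by their Fano lines and Baer subgroups; the unitals are given explicitly.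

In characteristic two the line at infinity of a translation plane is a Fano line; the Desarguesian
plane has further Fano lines, the other translation planes considered here have none, and their
duals have no Fano line at all. An isomorphism between planes with a unique Fano line is affine: it
induces an additive bijection of the translation groups that permutes the components of the
spreads. Hence it preserves the least number of Baer subgroups through a nonzero vector, and this
number separates the non-Desarguesian planes.
-/

section Incidence

variable {P L P' L' : Type*}

/-- An isomorphism between two incidence relations: bijections between the points and between the
lines that preserve and reflect incidence. -/
structure IncidenceIso (I : P → L → Prop) (J : P' → L' → Prop) where
  point : P ≃ P'
  line : L ≃ L'
  incid_iff (p : P) (l : L) : J (point p) (line l) ↔ I p l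

namespace IncidenceIso

variable {I : P → L → Prop} {J : P' → L' → Prop}

/-- The inverse isomorphism. -/
def symm (e : IncidenceIso I J) : IncidenceIso J I where
  point := e.point.symm
  line := e.line.symm
  incid_iff p l := by simp [← e.incid_iff]

/-- The isomorphism of the dual incidence relations. -/
def dual (e : IncidenceIso I J) : IncidenceIso (flip I) (flip J) where
  point := e.line
  line := e.point
  incid_iff l p := e.incid_iff p l

end IncidenceIso

theorem ProjPlane.HasOrder.exists_ne {A : ProjPlane} {n : ℕ} (hA : A.HasOrder n) (hn : n ≠ 0)
    (l : A.Line) : ∃ p q, p ≠ q ∧ A.Incid p l ∧ A.Incid q l := by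
  have := A.finite_point
  obtain ⟨p, hp, q, hq, hpq⟩ := (Set.one_lt_ncard (Set.toFinite _)).mp (by rw [hA l]; lia)
  exact ⟨p, q, hpq, hp, hq⟩

theorem ProjPlane.line_eq_of_incid (A : ProjPlane) {p q : A.Point} {l m : A.Line} (hpq : p ≠ q)
    (hpl : A.Incid p l) (hql : A.Incid q l) (hpm : A.Incid p m) (hqm : A.Incid q m) : l = m :=
  (A.exists_unique_line p q hpq).unique ⟨hpl, hql⟩ ⟨hpm, hqm⟩

theorem PlaneIso.nonempty_incidenceIso {A B : ProjPlane} {n : ℕ} (h : PlaneIso A B) (hn : n ≠ 0)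
    (hA : A.HasOrder n) (hB : B.HasOrder n) : Nonempty (IncidenceIso A.Incid B.Incid) := by
  obtain ⟨f, hf⟩ := h
  choose g hg using hf
  have incid_iff (p : A.Point) (l : A.Line) : B.Incid (f p) (g l) ↔ A.Incid p l := by
    have : f p ∈ f '' {p | A.Incid p l} ↔ B.Incid (f p) (g l) := by rw [hg l]; rfl
    rw [← this, f.injective.mem_set_image]
    rfl
  have g_injective : g.Injective := fun l m hlm => by
    obtain ⟨p, q, hpq, hp, hq⟩ := hA.exists_ne hn l
    refine A.line_eq_of_incid hpq hp hq ?_ ?_ <;> rwa [← incid_iff, ← hlm, incid_iff]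
  have g_surjective : g.Surjective := fun m => by
    obtain ⟨p, q, hpq, hp, hq⟩ := hB.exists_ne hn m
    obtain ⟨l, ⟨hpl, hql⟩, -⟩ :=
      A.exists_unique_line (f.symm p) (f.symm q) (f.symm.injective.ne hpq)
    rw [← incid_iff, f.apply_symm_apply] at hpl hql
    exact ⟨l, B.line_eq_of_incid hpq hpl hql hp hq⟩
  exact ⟨⟨f, .ofBijective g ⟨g_injective, g_surjective⟩, incid_iff⟩⟩

/-- The points `o, x, y, z` of a quadrangle, its diagonal points `p = ox ∩ yz`, `q = oy ∩ xz`, a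
point `s` of `oz` and the six sides; the incidences are imposed by `HasDiagonalsOn`. -/
structure QuadrangleFigure (P L : Type*) where
  (o x y z p q s : P)
  (ox yz oy xz oz xy : L)

namespace QuadrangleFigure

/-- The diagonal points `p` and `q` of the quadrangle lie on `l`, which meets the side `oz`
in `s`. -/
def HasDiagonalsOn (I : P → L → Prop) (l : L) (F : QuadrangleFigure P L) : Prop :=
  (I F.p l ∧ I F.q l ∧ I F.s l ∧ ¬ I F.o l ∧ ¬ I F.z l) ∧ F.p ≠ F.q ∧ F.o ≠ F.z ∧
  (I F.o F.ox ∧ I F.x F.ox ∧ I F.p F.ox) ∧ (I F.y F.yz ∧ I F.z F.yz ∧ I F.p F.yz) ∧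
  (I F.o F.oy ∧ I F.y F.oy ∧ I F.q F.oy) ∧ (I F.x F.xz ∧ I F.z F.xz ∧ I F.q F.xz) ∧
  (I F.o F.oz ∧ I F.z F.oz ∧ I F.s F.oz) ∧ I F.x F.xy ∧ I F.y F.xy

/-- The image of a figure under maps of the points and the lines. -/
def map (f : P → P') (g : L → L') (F : QuadrangleFigure P L) : QuadrangleFigure P' L' :=
  ⟨f F.o, f F.x, f F.y, f F.z, f F.p, f F.q, f F.s,
    g F.ox, g F.yz, g F.oy, g F.xz, g F.oz, g F.xy⟩

theorem hasDiagonalsOn_map {I : P → L → Prop} {J : P' → L' → Prop} (e : IncidenceIso I J)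
    {l : L} (F : QuadrangleFigure P L) :
    (F.map e.point e.line).HasDiagonalsOn J (e.line l) ↔ F.HasDiagonalsOn I l := by
  simp only [HasDiagonalsOn, map, e.incid_iff, e.point.injective.ne_iff]

end QuadrangleFigure

/-- A line `l` is a Fano line if every quadrangle with two diagonal points on `l` has its third
diagonal point on `l` too. -/
def IsFanoLine (I : P → L → Prop) (l : L) : Prop :=
  ∀ F : QuadrangleFigure P L, F.HasDiagonalsOn I l → I F.s F.xy

theorem IsFanoLine.map {I : P → L → Prop} {J : P' → L' → Prop} {l : L} (h : IsFanoLine I l)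
    (e : IncidenceIso I J) : IsFanoLine J (e.line l) := fun F hF => by
  rw [← e.symm.incid_iff]
  refine h (F.map e.symm.point e.symm.line) ?_
  rw [← QuadrangleFigure.hasDiagonalsOn_map e.symm] at hF
  rwa [show e.symm.line (e.line l) = l from e.line.symm_apply_apply l] at hF

end Incidence

section Coordinates

/-- Hall coordinates over `K`. Points are `(x, y)`, `(m)` and `(∞)`, lines are `[m, b]`, `[c]` and
`[∞]`; points and lines share this type because dualizing exchanges their roles. -/
inductive Coord (K : Type*)
  | pair (x y : K)
  | single (m : K)
  | infty
  deriving DecidableEq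

namespace Coord

variable {K : Type*}

/-- Affine points are pairs, and points at infinity are optional slopes. -/
def equivSum (K : Type*) : Coord K ≃ K × K ⊕ Option K where
  toFun
    | pair x y => .inl (x, y)
    | single m => .inr (some m)
    | infty => .inr none
  invFun
    | .inl v => pair v.1 v.2
    | .inr (some m) => single m
    | .inr none => infty
  left_inv := by rintro (_ | _ | _) <;> rfl
  right_inv := by rintro (_ | _ | _) <;> rfl

instance [Fintype K] : Fintype (Coord K) := .ofEquiv _ (equivSum K).symm

instance [Finite K] : Finite (Coord K) := .of_equiv _ (equivSum K).symm

variable [AddCommGroup K]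

/-- Incidence in Hall coordinates: `(x, y)` lies on `[m, b]` when `y + b = m ∘ x`, where `∘` is
`mul`. With `b` on the left, exchanging points and lines amounts to flipping `mul`. -/
def Incid (mul : K → K → K) : Coord K → Coord K → Prop
  | pair x y, pair m b => y + b = mul m x
  | pair x _, single c => x = c
  | single m, pair m' _ => m = m'
  | single _, infty => True
  | infty, single _ => True
  | infty, infty => True
  | _, _ => False

theorem incid_flip (mul : K → K → K) : Incid (flip mul) = flip (Incid mul) := by
  ext (_ | _ | _) (_ | _ | _) <;> simp [Incid, flip, add_comm, eq_comm]

instance [DecidableEq K] (mul : K → K → K) : DecidableRel (Incid mul)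
  | pair x y, pair m b => inferInstanceAs (Decidable (y + b = mul m x))
  | pair x _, single c => inferInstanceAs (Decidable (x = c))
  | single m, pair m' _ => inferInstanceAs (Decidable (m = m'))
  | single _, infty | infty, single _ | infty, infty => isTrue trivial
  | pair _ _, infty | single _, single _ | infty, pair _ _ => isFalse not_false

/-- The points on a line, parametrized by `K ∪ {∞}`. -/
def pointOn (mul : K → K → K) : Coord K → Option K → Coord K
  | pair m b, some x => pair x (mul m x - b)
  | pair m _, none => single m
  | single c, some y => pair c y
  | single _, none => infty
  | infty, some m => single m
  | infty, none => infty

theorem pointOn_injective (mul : K → K → K) (l : Coord K) : (pointOn mul l).Injective := by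
  rcases l with _ | _ | _ <;> rintro (_ | _) (_ | _) <;> simp +contextual [pointOn]

theorem incid_iff_mem_range (mul : K → K → K) (p l : Coord K) :
    Incid mul p l ↔ p ∈ Set.range (pointOn mul l) := by
  rcases p with _ | _ | _ <;> rcases l with _ | _ | _ <;>
    simp [Incid, pointOn, Option.exists, eq_sub_iff_add_eq, eq_comm]

end Coord

/-- The multiplication of a Cartesian group: `y + b = m ∘ x` coordinatizes a projective plane. -/
structure IsCartesian {K : Type*} [AddCommGroup K] (mul : K → K → K) : Prop where
  bijective_left {x x' : K} : x ≠ x' → (fun m => mul m x - mul m x').Bijective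
  bijective_right {m m' : K} : m ≠ m' → (fun x => mul m x - mul m' x).Bijective

namespace IsCartesian

variable {K : Type*} [AddCommGroup K] {mul : K → K → K}

theorem flip (h : IsCartesian mul) : IsCartesian (flip mul) :=
  ⟨h.bijective_right, h.bijective_left⟩

open Coord

theorem exists_line (h : IsCartesian mul) {p q : Coord K} (hpq : p ≠ q) :
    ∃ l, Incid mul p l ∧ Incid mul q l := by
  have affine {x y x' y' : K} (hx : x ≠ x') :
      ∃ l, Incid mul (pair x y) l ∧ Incid mul (pair x' y') l := by
    obtain ⟨m, hm⟩ := (h.bijective_left hx).surjective (y - y')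
    refine ⟨pair m (mul m x - y), add_sub_cancel _ _, ?_⟩
    simp only [Incid] at hm ⊢
    rw [← sub_sub_cancel (mul m x) (mul m x'), hm]; abel
  rcases p with ⟨x, y⟩ | m | _ <;> rcases q with ⟨x', y'⟩ | m' | _
  · by_cases hx : x = x'
    · exact ⟨single x, rfl, hx.symm⟩
    · exact affine hx
  · exact ⟨pair m' (mul m' x - y), add_sub_cancel _ _, rfl⟩
  · exact ⟨single x, rfl, trivial⟩
  · exact ⟨pair m (mul m x' - y'), rfl, add_sub_cancel _ _⟩
  · exact ⟨infty, trivial, trivial⟩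
  · exact ⟨infty, trivial, trivial⟩
  · exact ⟨single x', trivial, rfl⟩
  · exact ⟨infty, trivial, trivial⟩
  · exact absurd rfl hpq

theorem eq_or_eq (h : IsCartesian mul) {p q l k : Coord K} (hpl : Incid mul p l)
    (hql : Incid mul q l) (hpk : Incid mul p k) (hqk : Incid mul q k) : p = q ∨ l = k := by
  have affine {x y x' y' m b m' b' : K} (h₁ : y + b = mul m x) (h₂ : y' + b = mul m x')
      (h₃ : y + b' = mul m' x) (h₄ : y' + b' = mul m' x') :
      pair x y = pair x' y' ∨ pair m b = pair m' b' := by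
    by_cases hm : m = m'
    · subst hm
      exact .inr (by rw [add_left_cancel (h₁.trans h₃.symm)])
    · have hx : x = x' := (h.bijective_right hm).injective <| by
        simp only [← h₁, ← h₂, ← h₃, ← h₄, add_sub_add_left_eq_sub]
      subst hx
      exact .inl (by rw [add_right_cancel (h₁.trans h₂.symm)])
  rcases p with _ | _ | _ <;> rcases l with _ | _ | _ <;> try exact hpl.elim
  all_goals rcases q with _ | _ | _ <;> try exact hql.elim
  all_goals rcases k with _ | _ | _ <;> try first | exact hpk.elim | exact hqk.elim
  all_goals first | exact affine hpl hql hpk hqk | grind [Incid]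

theorem not_incid_of_ne (h : IsCartesian mul) {x p q l k k' : Coord K} (hpq : p ≠ q)
    (hpl : Incid mul p l) (hql : Incid mul q l) (hk : k ≠ l) (hk' : k' ≠ l) (hxk : Incid mul x k)
    (hpk : Incid mul p k) (hxk' : Incid mul x k') (hqk' : Incid mul q k') : ¬ Incid mul x l :=
  fun hxl => hpq <| ((h.eq_or_eq hxk hpk hxl hpl).resolve_right hk).symm.trans <|
    (h.eq_or_eq hxk' hqk' hxl hql).resolve_right hk'

theorem existsUnique_line (h : IsCartesian mul) {p q : Coord K} (hpq : p ≠ q) :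
    ∃! l, Incid mul p l ∧ Incid mul q l := by
  obtain ⟨l, hl⟩ := h.exists_line hpq
  exact ⟨l, hl, fun k hk => (h.eq_or_eq hk.1 hk.2 hl.1 hl.2).resolve_left hpq⟩

theorem existsUnique_point (h : IsCartesian mul) {l k : Coord K} (hlk : l ≠ k) :
    ∃! p, Incid mul p l ∧ Incid mul p k := by
  simpa only [incid_flip] using! h.flip.existsUnique_line hlk

theorem exists_frame [Nontrivial K] (mul : K → K → K) :
    ∃ f : Fin 4 → Coord K, f.Injective ∧ ∀ l, ∀ i j k : Fin 4, i ≠ j → i ≠ k → j ≠ k →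
      ¬ (Incid mul (f i) l ∧ Incid mul (f j) l ∧ Incid mul (f k) l) := by
  obtain ⟨a, b, hab⟩ := exists_pair_ne K
  refine ⟨![infty, single a, pair a (mul a a), pair b (mul a b + (a - b))], ?_, ?_⟩
  · intro i j hij
    fin_cases i <;> fin_cases j <;> simp_all
  · rintro (⟨m, c⟩ | _ | _) i j k hij hik hjk <;> fin_cases i <;> fin_cases j <;> fin_cases k <;>
      simp_all [Incid] <;> grind

variable {K : Type} [Finite K] [Nontrivial K] [AddCommGroup K] {mul : K → K → K}

/-- The projective plane coordinatized by a Cartesian group. -/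
def plane (h : IsCartesian mul) : ProjPlane where
  Point := Coord K
  Line := Coord K
  Incid := Incid mul
  finite_point := inferInstance
  finite_line := inferInstance
  exists_unique_line _ _ := h.existsUnique_line
  exists_unique_point _ _ := h.existsUnique_point
  nondegenerate := exists_frame mul

theorem plane_hasOrder (h : IsCartesian mul) : h.plane.HasOrder (Nat.card K) := by
  intro (l : Coord K)
  have points_eq : {p | Incid mul p l} = Set.range (pointOn mul l) :=
    Set.ext fun p => incid_iff_mem_range mul p l
  change {p | Incid mul p l}.ncard = _
  rw [points_eq, ← Nat.card_coe_set_eq, Nat.card_range_of_injective (pointOn_injective mul l),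
    Finite.card_option]

end IsCartesian

end Coordinates

section GroupPartitions

variable {ι V : Type*} [AddCommGroup V]

/-- The subgroups `C i` partition the nonzero elements of `V`, and none of them is all of `V`. -/
structure IsGroupPartition (C : ι → AddSubgroup V) : Prop where
  existsUnique {v : V} : v ≠ 0 → ∃! i, v ∈ C i
  ne_top (i : ι) : C i ≠ ⊤

namespace IsGroupPartition

variable {C : ι → AddSubgroup V}

theorem eq_of_mem (hC : IsGroupPartition C) {v : V} {i j : ι} (hv : v ≠ 0) (hi : v ∈ C i)
    (hj : v ∈ C j) : i = j :=
  (hC.existsUnique hv).unique hi hj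

theorem eq_zero_of_mem (hC : IsGroupPartition C) {v : V} {i j : ι} (hij : i ≠ j) (hi : v ∈ C i)
    (hj : v ∈ C j) : v = 0 :=
  by_contra fun hv => hij (hC.eq_of_mem hv hi hj)

theorem disjoint (hC : IsGroupPartition C) {i j : ι} (hij : i ≠ j) : Disjoint (C i) (C j) :=
  AddSubgroup.disjoint_def.mpr (hC.eq_zero_of_mem hij)

variable {ι' V' : Type*} [AddCommGroup V'] {C' : ι' → AddSubgroup V'}

theorem map_add (hC : IsGroupPartition C) (hC' : IsGroupPartition C') {φ : V → V'} {σ : ι → ι'}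
    (hσ : σ.Injective) (map_zero : φ 0 = 0)
    (hφ : ∀ i v w, v - w ∈ C i → φ v - φ w ∈ C' (σ i)) (v w : V) : φ (v + w) = φ v + φ w := by
  have mem {i v} (hv : v ∈ C i) : φ v ∈ C' (σ i) := by
    simpa [map_zero] using hφ i v 0 (by simpa)
  have of_ne {i j v w} (hij : i ≠ j) (hv : v ∈ C i) (hw : w ∈ C j) : φ (v + w) = φ v + φ w := by
    rw [← sub_eq_zero]
    refine hC'.eq_zero_of_mem (hσ.ne hij) ?_ ?_
    · rw [add_comm (φ v), ← sub_sub]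
      exact sub_mem (hφ i _ _ (by simpa)) (mem hv)
    · rw [← sub_sub]
      exact sub_mem (hφ j _ _ (by simpa)) (mem hw)
  by_cases hv₀ : v = 0
  · simp [hv₀, map_zero]
  by_cases hw₀ : w = 0
  · simp [hw₀, map_zero]
  obtain ⟨i, hv, -⟩ := hC.existsUnique hv₀
  obtain ⟨j, hw, -⟩ := hC.existsUnique hw₀
  by_cases hij : i ≠ j
  · exact of_ne hij hv hw
  obtain rfl : i = j := not_not.mp hij
  -- If `v` and `w` lie in the same component, expand `φ (v + w + c)` for some `c` outside of it.
  obtain ⟨c, hc⟩ := SetLike.exists_not_mem_of_ne_top (C i) (hC.ne_top i) rfl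
  have add_c {u} (hu : u ∈ C i) : φ (u + c) = φ u + φ c := by
    obtain ⟨k, hk, -⟩ := hC.existsUnique fun hc₀ : c = 0 => hc (hc₀ ▸ zero_mem _)
    exact of_ne (by rintro rfl; exact hc hk) hu hk
  have hwc : w + c ∉ C i := fun h => hc ((AddSubgroup.add_mem_cancel_left _ hw).mp h)
  obtain ⟨k, hk, -⟩ := hC.existsUnique fun h₀ : w + c = 0 => hwc (h₀ ▸ zero_mem _)
  have hvwc : φ (v + (w + c)) = φ v + φ (w + c) :=
    of_ne (by rintro rfl; exact hwc hk) hv hk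
  rw [← add_assoc, add_c (add_mem hv hw), add_c hw, ← add_assoc] at hvwc
  exact add_right_cancel hvwc

end IsGroupPartition

end GroupPartitions

section SpreadSets

/-- A spread set over `K`: additive maps `mul m`, for `m : K`, such that `mul m x` runs through `K`
exactly once as `m` does, for all `x ≠ 0`. The slope `m` with `mul m x = y` is `div y x`. -/
structure SpreadSet (K : Type*) [AddCommGroup K] where
  mul : K → K →+ K
  div : K → K → K
  mul_div (y : K) {x : K} : x ≠ 0 → mul (div y x) x = y
  div_mul (m : K) {x : K} : x ≠ 0 → div (mul m x) x = m

namespace SpreadSet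

variable {K : Type*} [AddCommGroup K] (Q : SpreadSet K)

theorem isCartesian [Finite K] : IsCartesian fun m x => Q.mul m x where
  bijective_left {x x'} hx := by
    rw [← sub_ne_zero] at hx
    simp only [← map_sub]
    exact Function.bijective_iff_has_inverse.mpr
      ⟨fun y => Q.div y (x - x'), fun m => Q.div_mul m hx, fun y => Q.mul_div y hx⟩
  bijective_right {m m'} hm := by
    refine Finite.injective_iff_bijective.mp
      ((injective_iff_map_eq_zero (Q.mul m - Q.mul m')).mpr fun x hx => ?_)
    by_contra hx₀
    rw [AddMonoidHom.sub_apply, sub_eq_zero] at hx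
    exact hm (by rw [← Q.div_mul m hx₀, hx, Q.div_mul m' hx₀])

open Coord

/-- The points of `K × K` on the line through the origin with a given slope, where `none` is the
slope of the vertical line. -/
def component : Option K → AddSubgroup (K × K)
  | some m => (Q.mul m).graph
  | none => (AddMonoidHom.fst K K).ker

theorem mem_component_some {m : K} {v : K × K} : v ∈ Q.component (some m) ↔ Q.mul m v.1 = v.2 :=
  Iff.rfl

theorem mem_component_none {v : K × K} : v ∈ Q.component none ↔ v.1 = 0 :=
  Iff.rfl

/-- The slope of the line through the origin and `v`. -/
def slope [DecidableEq K] (v : K × K) : Option K :=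
  if v.1 = 0 then none else some (Q.div v.2 v.1)

theorem mem_component_iff [DecidableEq K] {v : K × K} (hv : v ≠ 0) {s : Option K} :
    v ∈ Q.component s ↔ Q.slope v = s := by
  obtain ⟨x, y⟩ := v
  by_cases hx : x = 0
  · subst hx
    have hy : y ≠ 0 := fun hy => hv (by rw [hy, Prod.mk_zero_zero])
    cases s <;> simp [slope, mem_component_some, mem_component_none, hy.symm]
  · cases s with
    | none => simp [slope, mem_component_none, hx]
    | some m =>
      simp only [slope, mem_component_some, hx, if_false, Option.some_inj]
      exact ⟨fun h => h ▸ Q.div_mul m hx, fun h => h ▸ Q.mul_div y hx⟩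

theorem isGroupPartition [Nontrivial K] : IsGroupPartition Q.component where
  existsUnique hv := by
    classical
    exact ⟨_, (Q.mem_component_iff hv).mpr rfl, fun s hs => ((Q.mem_component_iff hv).mp hs).symm⟩
  ne_top s h := by
    obtain ⟨a, ha⟩ := exists_ne (0 : K)
    cases s with
    | none => exact ha (Q.mem_component_none.mp (h ▸ AddSubgroup.mem_top (a, 0)))
    | some m =>
      have : Q.mul m 0 = a := Q.mem_component_some.mp (h ▸ AddSubgroup.mem_top (0, a))
      exact ha (by rw [← this, map_zero])

end SpreadSet

end SpreadSets

section TranslationPlanes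

namespace Coord

variable {K : Type*}

/-- The affine points, as elements of the translation group `K × K`. -/
def affine (v : K × K) : Coord K := pair v.1 v.2

/-- The point at infinity of the lines with a given slope. -/
def direction : Option K → Coord K
  | some m => single m
  | none => infty

theorem affine_injective : (affine : K × K → Coord K).Injective := fun v w h => by
  simpa [affine, Prod.ext_iff] using h

theorem direction_injective : (direction : Option K → Coord K).Injective := by
  rintro (_ | _) (_ | _) <;> simp [direction]

variable [AddCommGroup K] {mul : K → K → K}

theorem incid_direction_infty (s : Option K) : Incid mul (direction s) infty := by
  cases s <;> trivial

theorem not_incid_affine_infty (v : K × K) : ¬ Incid mul (affine v) infty := id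

theorem exists_eq_direction {p : Coord K} (hp : Incid mul p infty) : ∃ s, p = direction s := by
  rcases p with _ | m | _
  exacts [hp.elim, ⟨some m, rfl⟩, ⟨none, rfl⟩]

theorem exists_eq_affine {p : Coord K} (hp : ¬ Incid mul p infty) : ∃ v, p = affine v := by
  rcases p with ⟨x, y⟩ | _ | _
  exacts [⟨(x, y), rfl⟩, absurd trivial hp, absurd trivial hp]

end Coord

namespace SpreadSet

open Coord

variable {K : Type*} [AddCommGroup K] (Q : SpreadSet K)

/-- The incidence relation of the translation plane of `Q`. -/
abbrev Incid : Coord K → Coord K → Prop := Coord.Incid fun m x => Q.mul m x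

variable {Q}

theorem sub_mem_component {v w : K × K} {l : Coord K} {s : Option K} (hv : Q.Incid (affine v) l)
    (hw : Q.Incid (affine w) l) (hs : Q.Incid (direction s) l) : v - w ∈ Q.component s := by
  rcases l with ⟨m, b⟩ | c | _ <;> rcases s with _ | m'
  · exact hs.elim
  · obtain rfl : m' = m := hs
    rw [mem_component_some, Prod.fst_sub, map_sub, ← show v.2 + b = Q.mul m' v.1 from hv,
      ← show w.2 + b = Q.mul m' w.1 from hw, add_sub_add_right_eq_sub, Prod.snd_sub]
  · rw [mem_component_none, Prod.fst_sub, show v.1 = c from hv, show w.1 = c from hw, sub_self]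
  · exact hs.elim
  · exact hv.elim
  · exact hv.elim

theorem exists_incid_direction {l : Coord K} (hl : l ≠ infty) :
    ∃ s, Q.Incid (direction s) l := by
  rcases l with ⟨m, b⟩ | c | _
  exacts [⟨some m, rfl⟩, ⟨none, trivial⟩, absurd rfl hl]

theorem incid_direction [Nontrivial K] {v w : K × K} {l : Coord K} {s : Option K} (hvw : v ≠ w)
    (hv : Q.Incid (affine v) l) (hw : Q.Incid (affine w) l) (hs : v - w ∈ Q.component s) :
    Q.Incid (direction s) l := by
  obtain ⟨t, ht⟩ := exists_incid_direction (Q := Q) (l := l) (by rintro rfl; exact hv)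
  rwa [Q.isGroupPartition.eq_of_mem (sub_ne_zero.mpr hvw) hs (sub_mem_component hv hw ht)]

section Fano

variable [Finite K]

theorem exists_quadrangle_eq_affine {F : QuadrangleFigure (Coord K) (Coord K)}
    (hF : F.HasDiagonalsOn Q.Incid infty) :
    (∃ o x y z, F.o = affine o ∧ F.x = affine x ∧ F.y = affine y ∧ F.z = affine z) ∧
      ∃ p q s, F.p = direction p ∧ F.q = direction q ∧ F.s = direction s := by
  obtain ⟨⟨hp, hq, hs, ho, hz⟩, hpq, -, ⟨hox₁, hox₂, hox₃⟩, ⟨hyz₁, hyz₂, hyz₃⟩, ⟨hoy₁, hoy₂, hoy₃⟩,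
    ⟨hxz₁, hxz₂, hxz₃⟩, -, -⟩ := hF
  have line_ne {p k : Coord K} (hp : ¬ Q.Incid p infty) (hk : Q.Incid p k) : k ≠ infty :=
    fun h => hp (h ▸ hk)
  have hx : ¬ Q.Incid F.x infty := Q.isCartesian.not_incid_of_ne hpq hp hq (line_ne ho hox₁)
    (line_ne hz hxz₂) hox₂ hox₃ hxz₁ hxz₃
  have hy : ¬ Q.Incid F.y infty := Q.isCartesian.not_incid_of_ne hpq hp hq (line_ne hz hyz₂)
    (line_ne ho hoy₁) hyz₁ hyz₃ hoy₂ hoy₃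
  obtain ⟨⟨o, ho⟩, ⟨x, hx⟩, ⟨y, hy⟩, ⟨z, hz⟩⟩ := And.intro (exists_eq_affine ho)
    (And.intro (exists_eq_affine hx) (And.intro (exists_eq_affine hy) (exists_eq_affine hz)))
  obtain ⟨⟨p, hp⟩, ⟨q, hq⟩, ⟨s, hs⟩⟩ := And.intro (exists_eq_direction hp)
    (And.intro (exists_eq_direction hq) (exists_eq_direction hs))
  exact ⟨⟨o, x, y, z, ho, hx, hy, hz⟩, p, q, s, hp, hq, hs⟩

-- In characteristic two, `x + y + o + z` lies in the components of the directions `p` and `q`,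
-- hence vanishes, so `xy` is parallel to `oz`.
theorem isFanoLine_infty [Nontrivial K] [Module (ZMod 2) K] : IsFanoLine Q.Incid infty := by
  intro F hF
  obtain ⟨⟨o, x, y, z, ho, hx, hy, hz⟩, p, q, s, hp, hq, hs⟩ := exists_quadrangle_eq_affine hF
  obtain ⟨-, hpq, hoz, ⟨hox₁, hox₂, hox₃⟩, ⟨hyz₁, hyz₂, hyz₃⟩, ⟨hoy₁, hoy₂, hoy₃⟩,
    ⟨hxz₁, hxz₂, hxz₃⟩, ⟨hoz₁, hoz₂, hoz₃⟩, hxy₁, hxy₂⟩ := hF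
  simp only [ho, hx, hy, hz, hp, hq, hs] at *
  have mem_p : (x - o) + (z - y) ∈ Q.component p :=
    add_mem (sub_mem_component hox₂ hox₁ hox₃) (sub_mem_component hyz₂ hyz₁ hyz₃)
  have mem_q : (y - o) + (z - x) ∈ Q.component q :=
    add_mem (sub_mem_component hoy₂ hoy₁ hoy₃) (sub_mem_component hxz₂ hxz₁ hxz₃)
  have diagonals_eq : (x - o) + (z - y) = (y - o) + (z - x) := by
    simp only [ZModModule.sub_eq_add]; abel
  have parallel : x - y = o - z := by
    rw [← sub_eq_zero]
    convert Q.isGroupPartition.eq_zero_of_mem (by rintro rfl; exact hpq rfl)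
      mem_p (diagonals_eq ▸ mem_q) using 1
    simp only [ZModModule.sub_eq_add]; abel
  have hxy : x ≠ y := by
    rintro rfl
    rw [sub_self, eq_comm, sub_eq_zero] at parallel
    exact hoz (parallel ▸ rfl)
  refine incid_direction hxy hxy₁ hxy₂ ?_
  rw [parallel]
  exact sub_mem_component hoz₁ hoz₂ hoz₃

end Fano

variable (Q) in
/-- The translation by `(a, b)`. -/
def translation (a b : K) : IncidenceIso Q.Incid Q.Incid where
  point :=
    { toFun
        | pair x y => pair (x + a) (y + b)
        | p => p
      invFun
        | pair x y => pair (x - a) (y - b)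
        | p => p
      left_inv := by rintro (_ | _ | _) <;> simp
      right_inv := by rintro (_ | _ | _) <;> simp }
  line :=
    { toFun
        | pair m c => pair m (c + (Q.mul m a - b))
        | single c => single (c + a)
        | infty => infty
      invFun
        | pair m c => pair m (c - (Q.mul m a - b))
        | single c => single (c - a)
        | infty => infty
      left_inv := by rintro (_ | _ | _) <;> simp
      right_inv := by rintro (_ | _ | _) <;> simp }
  incid_iff := by
    rintro (⟨x, y⟩ | _ | _) (⟨m, c⟩ | _ | _)
    · change y + b + (c + (Q.mul m a - b)) = Q.mul m (x + a) ↔ y + c = Q.mul m x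
      rw [map_add, show y + b + (c + (Q.mul m a - b)) = y + c + Q.mul m a by abel, add_left_inj]
    all_goals simp [Coord.Incid]

/-- The line through the origin with a given slope. -/
def originLine : Option K → Coord K
  | some m => pair m 0
  | none => single 0

theorem eq_infty_of_isFanoLine (h : ∀ s, ¬ IsFanoLine Q.Incid (originLine s)) {l : Coord K}
    (hl : IsFanoLine Q.Incid l) : l = infty := by
  rcases l with ⟨m, c⟩ | c | _
  · refine (h (some m) ?_).elim
    simpa [translation, originLine] using hl.map (Q.translation 0 c)
  · refine (h none ?_).elim
    simpa [translation, originLine] using hl.map (Q.translation (-c) 0)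
  · rfl

theorem not_isFanoLine_flip (h₀ : ¬ IsFanoLine (flip Q.Incid) (affine 0))
    (h : ∀ s, ¬ IsFanoLine (flip Q.Incid) (direction s)) (l : Coord K) :
    ¬ IsFanoLine (flip Q.Incid) l := fun hl => by
  rcases l with ⟨x, y⟩ | m | _
  · refine h₀ ?_
    simpa [translation, affine, IncidenceIso.dual] using hl.map (Q.translation (-x) (-y)).dual
  · exact h (some m) hl
  · exact h none hl

theorem exists_addMonoidHom [Finite K] [Nontrivial K] {K' : Type*} [AddCommGroup K']
    [Nontrivial K'] {R : SpreadSet K'} (e : IncidenceIso Q.Incid R.Incid)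
    (he : e.line infty = infty) :
    ∃ (φ : K × K →+ K' × K') (σ : Option K → Option K'), Function.Injective φ ∧ σ.Injective ∧
      ∀ s v, v ∈ Q.component s → φ v ∈ R.component (σ s) := by
  have incid_infty (p : Coord K) : R.Incid (e.point p) infty ↔ Q.Incid p infty := by
    rw [← he, e.incid_iff]
  choose σ hσ using fun s =>
    exists_eq_direction ((incid_infty (direction s)).mpr (incid_direction_infty s))
  choose f hf using fun v =>
    exists_eq_affine (mt (incid_infty (affine v)).mp (not_incid_affine_infty v))
  have σ_injective : σ.Injective := fun s t hst =>
    direction_injective (e.point.injective (by rw [hσ, hσ, hst]))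
  have f_injective : f.Injective := fun v w hvw =>
    affine_injective (e.point.injective (by rw [hf, hf, hvw]))
  have sub_mem (s v w) (hs : v - w ∈ Q.component s) : f v - f w ∈ R.component (σ s) := by
    by_cases hvw : v = w
    · simp [hvw]
    obtain ⟨l, hv, hw⟩ : ∃ l, Q.Incid (affine v) l ∧ Q.Incid (affine w) l :=
      Q.isCartesian.exists_line (affine_injective.ne hvw)
    have hl := incid_direction hvw hv hw hs
    rw [← e.incid_iff, hf] at hv hw
    rw [← e.incid_iff, hσ] at hl
    exact sub_mem_component hv hw hl
  have map_add := Q.isGroupPartition.map_add R.isGroupPartition (φ := fun v => f v - f 0)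
    σ_injective (sub_self _) fun s v w hs => by
      simpa using sub_mem s v w hs
  refine ⟨.mk' _ map_add, σ, fun v w hvw => f_injective (sub_left_injective hvw), σ_injective,
    fun s v hv => sub_mem s v 0 (by simpa)⟩

end SpreadSet

end TranslationPlanes

section BaerSubgroups

variable {ι V : Type*} [AddCommGroup V]

/-- Two vectors lie in a common component of `C`. -/
def SameComponent (C : ι → AddSubgroup V) (v w : V) : Prop :=
  ∃ i, v ∈ C i ∧ w ∈ C i

theorem SameComponent.exists_closure_le {C : ι → AddSubgroup V} {v w : V}
    (h : SameComponent C v w) :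
    ∃ i, AddSubgroup.closure {v, w} ≤ C i := by
  obtain ⟨i, hv, hw⟩ := h
  exact ⟨i, (AddSubgroup.closure_le _).mpr (Set.pair_subset hv hw)⟩

theorem IsGroupPartition.disjoint_closure {C : ι → AddSubgroup V} {x b y z : V}
    (hC : IsGroupPartition C) (hx : SameComponent C x b) (hy : SameComponent C y z)
    (hxy : ¬ SameComponent C x y) :
    Disjoint (AddSubgroup.closure {x, b}) (AddSubgroup.closure {y, z}) := by
  obtain ⟨i, hi⟩ := hx.exists_closure_le
  obtain ⟨j, hj⟩ := hy.exists_closure_le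
  refine (hC.disjoint ?_).mono hi hj
  rintro rfl
  exact hxy ⟨i, hi (AddSubgroup.subset_closure (.inl rfl)),
    hj (AddSubgroup.subset_closure (.inl rfl))⟩

/-- The subgroup `B` has order `q ^ 2` and is partitioned by its nonzero intersections with the
components of `C`, all of order `q`. In a translation plane of order `q ^ 2` these are the Baer
subplanes that contain the origin and whose line at infinity is `[∞]`. -/
structure IsBaerSubgroup (C : ι → AddSubgroup V) (q : ℕ) (B : AddSubgroup V) : Prop where
  card_eq : Nat.card B = q ^ 2
  card_inf_eq (i : ι) : B ⊓ C i ≠ ⊥ → Nat.card ↥(B ⊓ C i) = q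

/-- The Baer subgroups through `x`. -/
def baerSubgroups (C : ι → AddSubgroup V) (q : ℕ) (x : V) : Set (AddSubgroup V) :=
  {B | IsBaerSubgroup C q B ∧ x ∈ B}

theorem inf_ne_bot_of_mem {B D : AddSubgroup V} {v : V} (hv : v ≠ 0) (hB : v ∈ B) (hD : v ∈ D) :
    B ⊓ D ≠ ⊥ :=
  fun h => hv ((AddSubgroup.eq_bot_iff_forall _).mp h v ⟨hB, hD⟩)

theorem card_mul_card_le [Finite V] {B P R : AddSubgroup V} (hP : P ≤ B) (hR : R ≤ B)
    (hPR : Disjoint P R) : Nat.card P * Nat.card R ≤ Nat.card B := by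
  rw [← Nat.card_prod]
  refine Nat.card_le_card_of_injective
    (fun v : P × R => (⟨v.1 + v.2, add_mem (hP v.1.2) (hR v.2.2)⟩ : B)) fun v w hvw => ?_
  exact AddSubgroup.add_injective_of_disjoint hPR (congrArg Subtype.val hvw)

theorem card_sup_le [Finite V] (P R : AddSubgroup V) :
    Nat.card ↥(P ⊔ R) ≤ Nat.card P * Nat.card R := by
  rw [← Nat.card_prod]
  refine Nat.card_le_card_of_surjective
    (fun v : P × R => (⟨v.1 + v.2, AddSubgroup.add_mem_sup v.1.2 v.2.2⟩ : ↥(P ⊔ R))) fun v => ?_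
  obtain ⟨p, r, hpr⟩ := AddSubgroup.mem_sup'.mp v.2
  exact ⟨(p, r), Subtype.ext hpr⟩

namespace IsBaerSubgroup

variable {C : ι → AddSubgroup V} {B : AddSubgroup V} {q : ℕ}

theorem map {ι' V' : Type*} [AddCommGroup V'] {C' : ι' → AddSubgroup V'}
    (hB : IsBaerSubgroup C q B) (hC : IsGroupPartition C) (hC' : IsGroupPartition C') {φ : V →+ V'}
    (hφ : Function.Injective φ) {σ : ι → ι'} (hσ : σ.Injective)
    (h : ∀ i v, v ∈ C i → φ v ∈ C' (σ i)) : IsBaerSubgroup C' q (B.map φ) where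
  card_eq := by rw [AddSubgroup.card_map_of_injective hφ, hB.card_eq]
  card_inf_eq j hj := by
    obtain ⟨⟨_, ⟨v, hv, rfl⟩, hvj⟩, hφv⟩ := AddSubgroup.ne_bot_iff_exists_ne_zero.mp hj
    have hφv₀ : φ v ≠ 0 := fun h₀ => hφv (Subtype.ext h₀)
    have hv₀ : v ≠ 0 := fun h₀ => hφv₀ (by rw [h₀, map_zero])
    obtain ⟨i, hvi, -⟩ := hC.existsUnique hv₀
    obtain rfl : σ i = j := hC'.eq_of_mem hφv₀ (h i v hvi) hvj
    have map_inf : B.map φ ⊓ C' (σ i) = (B ⊓ C i).map φ := by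
      ext w
      constructor
      · rintro ⟨⟨w, hw, rfl⟩, hwi⟩
        refine AddSubgroup.mem_map_of_mem φ ⟨hw, ?_⟩
        by_cases hw₀ : w = 0
        · exact hw₀ ▸ zero_mem _
        obtain ⟨k, hwk, -⟩ := hC.existsUnique hw₀
        have hφw₀ : φ w ≠ 0 := (map_ne_zero_iff φ hφ).mpr hw₀
        rwa [hσ (hC'.eq_of_mem hφw₀ hwi (h k w hwk))]
      · rintro ⟨w, ⟨hw, hwi⟩, rfl⟩
        exact ⟨AddSubgroup.mem_map_of_mem φ hw, h i w hwi⟩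
    rw [map_inf, AddSubgroup.card_map_of_injective hφ,
      hB.card_inf_eq i (inf_ne_bot_of_mem hv₀ hv hvi)]

theorem of_le [Finite V] (hC : IsGroupPartition C) (card_eq : Nat.card B = q ^ 2)
    (le_card : ∀ i, B ⊓ C i ≠ ⊥ → q ≤ Nat.card ↥(B ⊓ C i)) (not_le : ∀ i, ¬ B ≤ C i) :
    IsBaerSubgroup C q B where
  card_eq := card_eq
  card_inf_eq i hi := by
    refine le_antisymm ?_ (le_card i hi)
    obtain ⟨v, hv, hvi⟩ := SetLike.not_le_iff_exists.mp (not_le i)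
    have hv₀ : v ≠ 0 := fun h => hvi (h ▸ zero_mem _)
    obtain ⟨j, hvj, -⟩ := hC.existsUnique hv₀
    have hij : i ≠ j := by rintro rfl; exact hvi hvj
    have hj := inf_ne_bot_of_mem hv₀ hv hvj
    have hq : 0 < q := pos_of_ne_zero fun h => Nat.card_pos.ne' (card_eq.trans (by simp [h]))
    have h := card_mul_card_le (inf_le_left : B ⊓ C i ≤ B) (inf_le_left : B ⊓ C j ≤ B)
      ((hC.disjoint hij).mono inf_le_right inf_le_right)
    rw [card_eq, sq] at h
    exact Nat.le_of_mul_le_mul_right ((Nat.mul_le_mul_left _ (le_card j hj)).trans h) hq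

theorem sup_eq [Finite V] (hB : IsBaerSubgroup C q B) (hC : IsGroupPartition C) {i j : ι}
    (hij : i ≠ j) (hi : B ⊓ C i ≠ ⊥) (hj : B ⊓ C j ≠ ⊥) : (B ⊓ C i) ⊔ (B ⊓ C j) = B := by
  refine AddSubgroup.eq_of_le_of_card_ge (sup_le inf_le_left inf_le_left) ?_
  calc Nat.card B = Nat.card ↥(B ⊓ C i) * Nat.card ↥(B ⊓ C j) := by
        rw [hB.card_inf_eq i hi, hB.card_inf_eq j hj, hB.card_eq, sq]
    _ ≤ _ := card_mul_card_le le_sup_left le_sup_right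
        ((hC.disjoint hij).mono inf_le_right inf_le_right)

end IsBaerSubgroup

theorem ncard_baerSubgroups_le {ι' V' : Type*} [AddCommGroup V'] [Finite V']
    {C : ι → AddSubgroup V} {C' : ι' → AddSubgroup V'} (hC : IsGroupPartition C)
    (hC' : IsGroupPartition C') {φ : V →+ V'} (hφ : Function.Injective φ) {σ : ι → ι'}
    (hσ : σ.Injective) (h : ∀ i v, v ∈ C i → φ v ∈ C' (σ i)) (q : ℕ) (x : V) :
    (baerSubgroups C q x).ncard ≤ (baerSubgroups C' q (φ x)).ncard :=
  Set.ncard_le_ncard_of_injOn (AddSubgroup.map φ)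
    (fun _ hB => ⟨hB.1.map hC hC' hφ hσ h, AddSubgroup.mem_map_of_mem φ hB.2⟩)
    (AddSubgroup.map_injective hφ).injOn

end BaerSubgroups

section BaerQuads

variable {ι V : Type*} [AddCommGroup V] [Module (ZMod 2) V] {C : ι → AddSubgroup V}
  {x b y z : V}

theorem mem_closure_pair_iff {v : V} :
    v ∈ AddSubgroup.closure {x, b} ↔ v = 0 ∨ v = x ∨ v = b ∨ v = x + b := by
  have zsmul_eq (n : ℤ) (w : V) : n • w = 0 ∨ n • w = w := by
    obtain ⟨k, rfl | rfl⟩ := n.even_or_odd' <;> simp [add_smul, mul_smul, two_smul,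
      ZModModule.add_self]
  constructor
  · rw [AddSubgroup.mem_closure_pair]
    rintro ⟨m, n, rfl⟩
    rcases zsmul_eq m x with hm | hm <;> rcases zsmul_eq n b with hn | hn <;> simp [hm, hn]
  · have hx : x ∈ AddSubgroup.closure {x, b} := AddSubgroup.mem_closure_of_mem (by simp)
    have hb : b ∈ AddSubgroup.closure {x, b} := AddSubgroup.mem_closure_of_mem (by simp)
    rintro (rfl | rfl | rfl | rfl)
    exacts [zero_mem _, hx, hb, add_mem hx hb]

theorem card_closure_pair (h : x ≠ 0 ∧ b ≠ 0 ∧ x ≠ b) :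
    Nat.card (AddSubgroup.closure {x, b}) = 4 := by
  obtain ⟨hx, hb, hxb⟩ := h
  classical
  have coe_eq : (AddSubgroup.closure {x, b} : Set V) = ({0, x, b, x + b} : Finset V) :=
    Set.ext fun v => by simp [mem_closure_pair_iff]
  have hxb₀ : x + b ≠ 0 := by rwa [← ZModModule.sub_eq_add, sub_ne_zero]
  rw [← SetLike.coe_sort_coe, coe_eq, Nat.card_coe_set_eq, Set.ncard_coe_finset]
  rw [Finset.card_insert_of_notMem (by simp [hx.symm, hb.symm, hxb₀.symm]),
    Finset.card_insert_of_notMem (by simp [hxb, hb]),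
    Finset.card_insert_of_notMem (by simp [hx]), Finset.card_singleton]

theorem card_closure_add_pair {P R : AddSubgroup V} (hPR : Disjoint P R) (hx : x ∈ P) (hb : b ∈ P)
    (h : x ≠ 0 ∧ b ≠ 0 ∧ x ≠ b) (hy : y ∈ R) (hz : z ∈ R) :
    Nat.card (AddSubgroup.closure {x + y, b + z}) = 4 := by
  have add_ne_zero {p r : V} (hp : p ∈ P) (hp₀ : p ≠ 0) (hr : r ∈ R) : p + r ≠ 0 := fun h =>
    hp₀ (AddSubgroup.disjoint_def.mp hPR hp (by
      rw [← ZModModule.sub_eq_add, sub_eq_zero] at h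
      exact h ▸ hr))
  refine card_closure_pair
    ⟨add_ne_zero hx h.1 hy, add_ne_zero hb h.2.1 hz, sub_ne_zero.mp ?_⟩
  rw [add_sub_add_comm]
  exact add_ne_zero (sub_mem hx hb) (sub_ne_zero.mpr h.2.2) (sub_mem hy hz)

/-- Vectors `x, b` and `y, z` of two different components such that each of the other three
components of a regular spread of `⟨x, b, y, z⟩` is contained in a component of `C`. -/
structure IsBaerQuad (C : ι → AddSubgroup V) (x b y z : V) : Prop where
  ne_zero_left : x ≠ 0 ∧ b ≠ 0 ∧ x ≠ b
  ne_zero_right : y ≠ 0 ∧ z ≠ 0 ∧ y ≠ z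
  not_same : ¬ SameComponent C x y
  same_left : SameComponent C x b
  same_right : SameComponent C y z
  same_add₁ : SameComponent C (x + y) (b + z)
  same_add₂ : SameComponent C (x + z) (b + (y + z))
  same_add₃ : SameComponent C (x + (y + z)) (b + y)

/-- The candidate Baer subgroup spanned by a quadruple. -/
def quadSpan (x b y z : V) : AddSubgroup V :=
  AddSubgroup.closure {x, b} ⊔ AddSubgroup.closure {y, z}

theorem mem_quadSpan_iff {v : V} : v ∈ quadSpan x b y z ↔
    ∃ p, (p = 0 ∨ p = x ∨ p = b ∨ p = x + b) ∧
      ∃ r, (r = 0 ∨ r = y ∨ r = z ∨ r = y + z) ∧ p + r = v := by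
  simp only [quadSpan, AddSubgroup.mem_sup, mem_closure_pair_iff]

theorem left_mem_quadSpan : x ∈ quadSpan x b y z :=
  AddSubgroup.mem_sup_left (mem_closure_pair_iff.mpr (.inr (.inl rfl)))

namespace IsBaerQuad

theorem card_quadSpan [Finite V] (h : IsBaerQuad C x b y z) (hC : IsGroupPartition C) :
    Nat.card (quadSpan x b y z) = 4 ^ 2 := by
  have hP := card_closure_pair h.ne_zero_left
  have hR := card_closure_pair h.ne_zero_right
  have hle := card_sup_le (AddSubgroup.closure {x, b}) (AddSubgroup.closure {y, z})
  have hge := card_mul_card_le (le_sup_left (a := AddSubgroup.closure {x, b}))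
    (le_sup_right (b := AddSubgroup.closure {y, z}))
    (hC.disjoint_closure h.same_left h.same_right h.not_same)
  rw [hP, hR] at hle hge
  exact le_antisymm hle hge

theorem mem_closure_of_mem_quadSpan {v : V} (hv : v ∈ quadSpan x b y z) (hv₀ : v ≠ 0) :
    v ∈ AddSubgroup.closure {x, b} ∨ v ∈ AddSubgroup.closure {y, z} ∨
      v ∈ AddSubgroup.closure {x + y, b + z} ∨ v ∈ AddSubgroup.closure {x + z, b + (y + z)} ∨
      v ∈ AddSubgroup.closure {x + (y + z), b + y} := by
  have cancel (v w : V) : v + (v + w) = w := by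
    rw [← add_assoc, ZModModule.add_self, zero_add]
  simp only [mem_closure_pair_iff]
  rcases mem_quadSpan_iff.mp hv with
    ⟨p, rfl | rfl | rfl | rfl, r, rfl | rfl | rfl | rfl, rfl⟩ <;>
  simp_all [add_left_comm, add_comm]

theorem exists_pair (h : IsBaerQuad C x b y z) (hC : IsGroupPartition C) {v : V}
    (hv : v ∈ quadSpan x b y z) (hv₀ : v ≠ 0) :
    ∃ g h, Nat.card (AddSubgroup.closure {g, h}) = 4 ∧ SameComponent C g h ∧
      AddSubgroup.closure {g, h} ≤ quadSpan x b y z ∧ v ∈ AddSubgroup.closure {g, h} := by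
  have add_pair {y' z' : V} (hy : y' ∈ AddSubgroup.closure {y, z})
      (hz : z' ∈ AddSubgroup.closure {y, z}) (hsame : SameComponent C (x + y') (b + z'))
      (hv : v ∈ AddSubgroup.closure {x + y', b + z'}) :
      ∃ g h, Nat.card (AddSubgroup.closure {g, h}) = 4 ∧ SameComponent C g h ∧
        AddSubgroup.closure {g, h} ≤ quadSpan x b y z ∧ v ∈ AddSubgroup.closure {g, h} := by
    have hdisj := hC.disjoint_closure h.same_left h.same_right h.not_same
    have hx : x ∈ AddSubgroup.closure {x, b} := AddSubgroup.subset_closure (.inl rfl)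
    have hb : b ∈ AddSubgroup.closure {x, b} := AddSubgroup.subset_closure (.inr rfl)
    refine ⟨_, _, card_closure_add_pair hdisj hx hb h.ne_zero_left hy hz, hsame,
      (AddSubgroup.closure_le _).mpr (Set.pair_subset ?_ ?_), hv⟩
    exacts [AddSubgroup.add_mem_sup hx hy, AddSubgroup.add_mem_sup hb hz]
  have hy : y ∈ AddSubgroup.closure {y, z} := AddSubgroup.subset_closure (.inl rfl)
  have hz : z ∈ AddSubgroup.closure {y, z} := AddSubgroup.subset_closure (.inr rfl)
  rcases mem_closure_of_mem_quadSpan hv hv₀ with hv | hv | hv | hv | hv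
  · exact ⟨x, b, card_closure_pair h.ne_zero_left, h.same_left, le_sup_left, hv⟩
  · exact ⟨y, z, card_closure_pair h.ne_zero_right, h.same_right, le_sup_right, hv⟩
  · exact add_pair hy hz h.same_add₁ hv
  · exact add_pair hz (add_mem hy hz) h.same_add₂ hv
  · exact add_pair (add_mem hy hz) hy h.same_add₃ hv

theorem isBaerSubgroup [Finite V] (h : IsBaerQuad C x b y z) (hC : IsGroupPartition C) :
    IsBaerSubgroup C 4 (quadSpan x b y z) := by
  refine .of_le hC (h.card_quadSpan hC) (fun i hi => ?_) fun i hi => h.not_same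
    ⟨i, hi left_mem_quadSpan,
      hi (AddSubgroup.mem_sup_right (mem_closure_pair_iff.mpr (.inr (.inl rfl))))⟩
  obtain ⟨⟨v, hv, hvi⟩, hv₀⟩ := AddSubgroup.ne_bot_iff_exists_ne_zero.mp hi
  replace hv₀ : v ≠ 0 := fun h₀ => hv₀ (Subtype.ext h₀)
  obtain ⟨g, h, hcard, hgh, hle, hvgh⟩ := h.exists_pair hC hv hv₀
  obtain ⟨j, hj⟩ := hgh.exists_closure_le
  obtain rfl : i = j := hC.eq_of_mem hv₀ hvi (hj hvgh)
  exact hcard ▸ AddSubgroup.card_le_of_le (le_inf hle hj)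

end IsBaerQuad

end BaerQuads

section ExistsQuad

variable {ι V : Type*} [AddCommGroup V] {C : ι → AddSubgroup V} {B : AddSubgroup V} {s t : ι}
  {x b y z : V}

namespace IsGroupPartition

theorem add_notMem_left (hC : IsGroupPartition C) (hst : s ≠ t) (hx : x ∈ C s) (hy : y ∈ C t)
    (hy₀ : y ≠ 0) : x + y ∉ C s :=
  fun h => hy₀ (hC.eq_zero_of_mem hst ((AddSubgroup.add_mem_cancel_left _ hx).mp h) hy)

theorem add_ne_zero (hC : IsGroupPartition C) (hst : s ≠ t) (hx : x ∈ C s) (hy : y ∈ C t)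
    (hy₀ : y ≠ 0) : x + y ≠ 0 :=
  fun h => hC.add_notMem_left hst hx hy hy₀ (h ▸ zero_mem _)

theorem companion_injective (hC : IsGroupPartition C) (hst : s ≠ t) (hx : x ∈ C s) (hx₀ : x ≠ 0)
    (hb : b ∈ C s) {y' : V} (hy : y ∈ C t) (hy' : y' ∈ C t) (hz : z ∈ C t) (hz₀ : z ≠ 0)
    (h : SameComponent C (x + y) (b + z)) (h' : SameComponent C (x + y') (b + z)) : y = y' := by
  obtain ⟨u, hu, hbu⟩ := h
  obtain ⟨v, hv, hbv⟩ := h'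
  obtain rfl := hC.eq_of_mem (hC.add_ne_zero hst hb hz hz₀) hbu hbv
  have htu : t ≠ u := by
    rintro rfl
    exact hC.add_notMem_left hst.symm hy hx hx₀ (add_comm x y ▸ hu)
  refine sub_eq_zero.mp (hC.eq_zero_of_mem htu (sub_mem hy hy') ?_)
  rw [← add_sub_add_left_eq_sub y y' x]
  exact sub_mem hu hv

variable [Module (ZMod 2) V]

theorem companion_ne (hC : IsGroupPartition C) (hst : s ≠ t) (hx : x ∈ C s) (hx₀ : x ≠ 0)
    (hb : b ∈ C s) (hy : y ∈ C t) (hz : z ∈ C t) (hyz : y ≠ z)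
    (h : SameComponent C (x + y) (b + z)) : ¬ SameComponent C (x + z) (b + y) := by
  rintro ⟨v, hv, hbv⟩
  obtain ⟨u, hu, hbu⟩ := h
  have hsum : x + y + (b + z) = x + z + (b + y) := by abel
  have hsum₀ : x + y + (b + z) ≠ 0 := by
    rw [add_add_add_comm]
    refine hC.add_ne_zero hst (add_mem hx hb) (add_mem hy hz) ?_
    rwa [← ZModModule.sub_eq_add, sub_ne_zero]
  obtain rfl := hC.eq_of_mem hsum₀ (add_mem hu hbu) (hsum ▸ add_mem hv hbv)
  have htu : t ≠ u := by
    rintro rfl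
    exact hC.add_notMem_left hst.symm hy hx hx₀ (add_comm x y ▸ hu)
  refine hyz (sub_eq_zero.mp (hC.eq_zero_of_mem htu (sub_mem hy hz) ?_))
  rw [← add_sub_add_left_eq_sub y z x]
  exact sub_mem hu hv

end IsGroupPartition

variable [Module (ZMod 2) V]

namespace IsBaerSubgroup

variable [Finite V]

theorem exists_companion {q : ℕ} (hB : IsBaerSubgroup C q B) (hC : IsGroupPartition C)
    (hst : s ≠ t) (hx : x ∈ B ⊓ C s) (hb : b ∈ B ⊓ C s) (hxb : x ≠ 0 ∧ b ≠ 0 ∧ x ≠ b)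
    (hy : y ∈ B ⊓ C t) (hy₀ : y ≠ 0) :
    ∃ z ∈ B ⊓ C t, z ≠ 0 ∧ y ≠ z ∧ SameComponent C (x + y) (b + z) := by
  have hxy := hC.add_ne_zero hst hx.2 hy.2 hy₀
  obtain ⟨u, hu, -⟩ := hC.existsUnique hxy
  have hsu : s ≠ u := by
    rintro rfl
    exact hC.add_notMem_left hst hx.2 hy.2 hy₀ hu
  have htu : u ≠ t := by
    rintro rfl
    exact hC.add_notMem_left hst.symm hy.2 hx.2 hxb.1 (add_comm x y ▸ hu)
  have hb_sup := (hB.sup_eq hC htu (inf_ne_bot_of_mem hxy (add_mem hx.1 hy.1) hu)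
    (inf_ne_bot_of_mem hy₀ hy.1 hy.2)).ge hb.1
  obtain ⟨w, hw, z, hz, rfl⟩ := AddSubgroup.mem_sup.mp hb_sup
  have add_z : w + z + z = w := by rw [add_assoc, ZModModule.add_self, add_zero]
  refine ⟨z, hz, ?_, ?_, u, hu, add_z.symm ▸ hw.2⟩
  · rintro rfl
    rw [add_zero] at hb hxb
    exact hxb.2.1 (hC.eq_zero_of_mem hsu hb.2 hw.2)
  · rintro rfl
    have h : x - (w + y) ∈ C u := by
      rw [← add_sub_add_right_eq_sub x (w + y) y, add_z]
      exact sub_mem hu hw.2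
    exact hxb.2.2 (sub_eq_zero.mp (hC.eq_zero_of_mem hsu (sub_mem hx.2 hb.2) h))

theorem inf_eq_closure_pair (hB : IsBaerSubgroup C 4 B) (hy : y ∈ B ⊓ C t) (hz : z ∈ B ⊓ C t)
    (hyz : y ≠ 0 ∧ z ≠ 0 ∧ y ≠ z) : B ⊓ C t = AddSubgroup.closure {y, z} := by
  refine (AddSubgroup.eq_of_le_of_card_ge
    ((AddSubgroup.closure_le _).mpr (Set.pair_subset hy hz)) ?_).symm
  rw [card_closure_pair hyz, hB.card_inf_eq t (inf_ne_bot_of_mem hyz.1 hy.1 hy.2)]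

theorem exists_isBaerQuad (hB : IsBaerSubgroup C 4 B) (hC : IsGroupPartition C) (hst : s ≠ t)
    (hx : x ∈ B ⊓ C s) (hb : b ∈ B ⊓ C s) (hxb : x ≠ 0 ∧ b ≠ 0 ∧ x ≠ b) (hy : y ∈ B ⊓ C t)
    (hy₀ : y ≠ 0) : ∃ z ∈ B, IsBaerQuad C x b y z := by
  obtain ⟨z, hz, hz₀, hyz, h₁⟩ := hB.exists_companion hC hst hx hb hxb hy hy₀
  have hyz₀ : y + z ≠ 0 := by rwa [← ZModModule.sub_eq_add, sub_ne_zero]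
  have mem_iff {v : V} : v ∈ B ⊓ C t ↔ v = 0 ∨ v = y ∨ v = z ∨ v = y + z := by
    rw [hB.inf_eq_closure_pair hy hz ⟨hy₀, hz₀, hyz⟩, mem_closure_pair_iff]
  have h₂ : SameComponent C (x + z) (b + (y + z)) := by
    obtain ⟨w, hw, hw₀, hzw, h⟩ := hB.exists_companion hC hst hx hb hxb hz hz₀
    rcases mem_iff.mp hw with rfl | rfl | rfl | rfl
    · exact absurd rfl hw₀
    · exact absurd h (hC.companion_ne hst hx.2 hxb.1 hb.2 hy.2 hz.2 hyz h₁)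
    · exact absurd rfl hzw
    · exact h
  have h₃ : SameComponent C (x + (y + z)) (b + y) := by
    obtain ⟨w, hw, hw₀, hzw, h⟩ := hB.exists_companion hC hst hx hb hxb (add_mem hy hz) hyz₀
    rcases mem_iff.mp hw with rfl | rfl | rfl | rfl
    · exact absurd rfl hw₀
    · exact h
    · exact absurd (hC.companion_injective hst hx.2 hxb.1 hb.2 hy.2 (add_mem hy.2 hz.2) hz.2 hz₀
        h₁ h) (by simpa using hz₀)
    · exact absurd rfl hzw
  refine ⟨z, hz.1, hxb, ⟨hy₀, hz₀, hyz⟩, fun ⟨u, hxu, hyu⟩ => hst ?_, ⟨s, hx.2, hb.2⟩,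
    ⟨t, hy.2, hz.2⟩, h₁, h₂, h₃⟩
  rw [hC.eq_of_mem hxb.1 hx.2 hxu, hC.eq_of_mem hy₀ hy.2 hyu]

theorem quadSpan_eq (hB : IsBaerSubgroup C 4 B) (hC : IsGroupPartition C)
    (h : IsBaerQuad C x b y z) (hx : x ∈ B) (hb : b ∈ B) (hy : y ∈ B) (hz : z ∈ B) :
    quadSpan x b y z = B := by
  refine AddSubgroup.eq_of_le_of_card_ge (sup_le ?_ ?_) ?_
  · exact (AddSubgroup.closure_le _).mpr (Set.pair_subset hx hb)
  · exact (AddSubgroup.closure_le _).mpr (Set.pair_subset hy hz)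
  · rw [h.card_quadSpan hC, hB.card_eq]

end IsBaerSubgroup

end ExistsQuad

section CountBaerSubgroups

variable {ι V : Type*} [AddCommGroup V] {C : ι → AddSubgroup V} {B : AddSubgroup V} {x : V}

/-- The triples that complete `x` to a Baer quadruple and whose first two entries belong to `T`. -/
def baerQuadTriples (C : ι → AddSubgroup V) (T : Set V) (x : V) : Set (V × V × V) :=
  {t | t.1 ∈ T ∧ t.2.1 ∈ T ∧ IsBaerQuad C x t.1 t.2.1 t.2.2}

variable [Finite V] [Module (ZMod 2) V] {T : Set V}

theorem two_mul_ncard_inter_of_add_mem_iff {S : Set V} (hS : ∀ v ∈ S, v + x ∈ S)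
    (hT : ∀ v, v + x ∈ T ↔ v ∉ T) : 2 * (S ∩ T).ncard = S.ncard := by
  have add_add (v : V) : v + x + x = v := by rw [add_assoc, ZModModule.add_self, add_zero]
  have image_add : (· + x) '' (S ∩ T) = S \ T := by
    ext v
    constructor
    · rintro ⟨w, ⟨hwS, hwT⟩, rfl⟩
      exact ⟨hS w hwS, fun h => (hT w).mp h hwT⟩
    · rintro ⟨hvS, hvT⟩
      exact ⟨v + x, ⟨hS v hvS, (hT v).mpr hvT⟩, add_add v⟩
  rw [← Set.ncard_inter_add_ncard_sdiff_eq_ncard S T, ← image_add,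
    Set.ncard_image_of_injective _ (add_left_injective x), two_mul]

theorem IsBaerSubgroup.ncard_pairs (hB : IsBaerSubgroup C 4 B) {s : ι} (hx : x ∈ B ⊓ C s)
    (hx₀ : x ≠ 0) (hT : ∀ v, v + x ∈ T ↔ v ∉ T) :
    ((((B ⊓ C s : AddSubgroup V) : Set V) \ {0, x} ∩ T) ×ˢ
      ((B : Set V) \ (B ⊓ C s : AddSubgroup V) ∩ T)).ncard = 6 := by
  have card_inf := hB.card_inf_eq s (inf_ne_bot_of_mem hx₀ hx.1 hx.2)
  have card_left : (((B ⊓ C s : AddSubgroup V) : Set V) \ {0, x}).ncard = 2 := by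
    rw [Set.ncard_sdiff (Set.pair_subset (zero_mem _) hx), Set.ncard_pair hx₀.symm,
      ← Nat.card_coe_set_eq, SetLike.coe_sort_coe, card_inf]
  have card_right : ((B : Set V) \ (B ⊓ C s : AddSubgroup V)).ncard = 12 := by
    rw [Set.ncard_sdiff (SetLike.coe_subset_coe.mpr inf_le_left), ← Nat.card_coe_set_eq,
      ← Nat.card_coe_set_eq, SetLike.coe_sort_coe, SetLike.coe_sort_coe, card_inf, hB.card_eq]
    rfl
  have half_left := two_mul_ncard_inter_of_add_mem_iff
    (S := ((B ⊓ C s : AddSubgroup V) : Set V) \ {0, x}) (fun v hv => ⟨add_mem hv.1 hx, fun h =>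
      hv.2 (h.symm.imp add_eq_right.mp fun h =>
        sub_eq_zero.mp ((ZModModule.sub_eq_add v x).trans h))⟩) hT
  have half_right := two_mul_ncard_inter_of_add_mem_iff
    (S := (B : Set V) \ (B ⊓ C s : AddSubgroup V)) (fun v hv => ⟨add_mem hv.1 hx.1, fun h =>
      hv.2 ((AddSubgroup.add_mem_cancel_right _ hx).mp h)⟩) hT
  rw [Set.ncard_prod, show Set.ncard _ = 1 by omega, show Set.ncard _ = 6 by omega]

theorem IsBaerSubgroup.le_ncard_triples (hB : IsBaerSubgroup C 4 B) (hC : IsGroupPartition C)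
    (hx : x ∈ B) (hx₀ : x ≠ 0) (hT : ∀ v, v + x ∈ T ↔ v ∉ T) :
    6 ≤ {t ∈ baerQuadTriples C T x | quadSpan x t.1 t.2.1 t.2.2 = B}.ncard := by
  obtain ⟨s, hs, -⟩ := hC.existsUnique hx₀
  rw [← hB.ncard_pairs ⟨hx, hs⟩ hx₀ hT]
  refine (Set.ncard_le_ncard ?_).trans (Set.ncard_image_le (f := fun t => (t.1, t.2.1)))
  rintro ⟨b, y⟩ ⟨⟨⟨hb, hbx⟩, hbT⟩, ⟨hyB, hys⟩, hyT⟩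
  simp only [Set.mem_insert_iff, Set.mem_singleton_iff, not_or] at hbx
  have hy₀ : y ≠ 0 := fun h => hys (h ▸ zero_mem _)
  obtain ⟨t, ht, -⟩ := hC.existsUnique hy₀
  have hst : s ≠ t := by
    rintro rfl
    exact hys ⟨hyB, ht⟩
  obtain ⟨z, hz, hquad⟩ := hB.exists_isBaerQuad hC hst ⟨hx, hs⟩ hb ⟨hx₀, hbx.1, Ne.symm hbx.2⟩
    ⟨hyB, ht⟩ hy₀
  exact ⟨(b, y, z), ⟨⟨hbT, hyT, hquad⟩, hB.quadSpan_eq hC hquad hx hb.1 hyB hz⟩, rfl⟩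

theorem six_mul_ncard_baerSubgroups_le (hC : IsGroupPartition C) (hx₀ : x ≠ 0)
    (hT : ∀ v, v + x ∈ T ↔ v ∉ T) :
    6 * (baerSubgroups C 4 x).ncard ≤ (baerQuadTriples C T x).ncard := by
  classical
  rw [Set.ncard_eq_toFinset_card _ (Set.toFinite _), Set.ncard_eq_toFinset_card _ (Set.toFinite _)]
  refine Finset.mul_card_image_le_card_of_maps_to (f := fun t => quadSpan x t.1 t.2.1 t.2.2)
    (fun t ht => ?_) 6 fun B hB => ?_
  · rw [Set.Finite.mem_toFinset] at ht ⊢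
    exact ⟨ht.2.2.isBaerSubgroup hC, left_mem_quadSpan⟩
  · rw [Set.Finite.mem_toFinset] at hB
    convert hB.1.le_ncard_triples hC hB.2 hx₀ hT
    rw [← Set.ncard_coe_finset]
    congr 1
    ext t
    simp

end CountBaerSubgroups

namespace SpreadSet

section BaerQuads

variable {K : Type*} [AddCommGroup K] (Q : SpreadSet K)

instance : (s : Option K) → [DecidableEq K] → DecidablePred (· ∈ Q.component s)
  | none, _ => fun v => inferInstanceAs (Decidable (v.1 = 0))
  | some m, _ => fun v => inferInstanceAs (Decidable (Q.mul m v.1 = v.2))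

/-- The points of a component, numbered by `K`. -/
def componentPoint (s : Option K) (i : K) : K × K :=
  s.elim (0, i) fun m => (i, Q.mul m i)

theorem exists_componentPoint_eq {s : Option K} {v : K × K} (hv : v ∈ Q.component s) :
    ∃ i, Q.componentPoint s i = v := by
  cases s with
  | none => exact ⟨v.2, Prod.ext hv.symm rfl⟩
  | some m => exact ⟨v.1, Prod.ext rfl hv⟩

theorem componentPoint_zero (s : Option K) : Q.componentPoint s 0 = 0 := by
  cases s <;> simp [componentPoint]

variable [DecidableEq K]

theorem mem_component_slope (v : K × K) : v ∈ Q.component (Q.slope v) := by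
  by_cases hv : v = 0
  · exact hv ▸ zero_mem _
  · exact (Q.mem_component_iff hv).mpr rfl

theorem sameComponent_iff {v w : K × K} (hv : v ≠ 0) :
    SameComponent Q.component v w ↔ w ∈ Q.component (Q.slope v) :=
  ⟨fun ⟨_, hs, hw⟩ => (Q.mem_component_iff hv).mp hs ▸ hw,
    fun hw => ⟨_, Q.mem_component_slope v, hw⟩⟩

/-- The last three conditions of `IsBaerQuad` in terms of slopes. -/
def IsRegularQuad (x b y z : K × K) : Prop :=
  b + z ∈ Q.component (Q.slope (x + y)) ∧ b + (y + z) ∈ Q.component (Q.slope (x + z)) ∧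
    b + y ∈ Q.component (Q.slope (x + (y + z)))

instance (x b y z : K × K) : Decidable (Q.IsRegularQuad x b y z) :=
  inferInstanceAs (Decidable (_ ∧ _ ∧ _))

theorem isBaerQuad_iff [Nontrivial K] {x b y z : K × K} : IsBaerQuad Q.component x b y z ↔
    (x ≠ 0 ∧ b ≠ 0 ∧ x ≠ b) ∧ (y ≠ 0 ∧ z ≠ 0 ∧ y ≠ z) ∧ y ∉ Q.component (Q.slope x) ∧
      b ∈ Q.component (Q.slope x) ∧ z ∈ Q.component (Q.slope y) ∧ Q.IsRegularQuad x b y z := by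
  constructor
  · intro h
    have hx := h.ne_zero_left.1
    have hy := h.ne_zero_right.1
    obtain ⟨s, hxs, -⟩ := h.same_left
    obtain ⟨t, hyt, hzt⟩ := h.same_right
    have hts : t ≠ s := by
      rintro rfl
      exact h.not_same ⟨t, hxs, hyt⟩
    have add_ne_zero {v : K × K} (hv : v ∈ Q.component t) : x + v ≠ 0 := by
      rw [add_comm]
      exact Q.isGroupPartition.add_ne_zero hts hv hxs hx
    refine ⟨h.ne_zero_left, h.ne_zero_right, ?_, ?_, ?_, ?_, ?_, ?_⟩
    · rw [← Q.sameComponent_iff hx]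
      exact h.not_same
    · exact (Q.sameComponent_iff hx).mp h.same_left
    · exact (Q.sameComponent_iff hy).mp h.same_right
    · exact (Q.sameComponent_iff (add_ne_zero hyt)).mp h.same_add₁
    · exact (Q.sameComponent_iff (add_ne_zero hzt)).mp h.same_add₂
    · exact (Q.sameComponent_iff (add_ne_zero (add_mem hyt hzt))).mp h.same_add₃
  · rintro ⟨hxb, hyz, hxy, hb, hz, h₁, h₂, h₃⟩
    have same {v w : K × K} (h : w ∈ Q.component (Q.slope v)) : SameComponent Q.component v w :=
      ⟨_, Q.mem_component_slope v, h⟩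
    exact ⟨hxb, hyz, (Q.sameComponent_iff hxb.1).not.mpr hxy, same hb, same hz, same h₁, same h₂,
      same h₃⟩

instance [Nontrivial K] (x b y z : K × K) : Decidable (IsBaerQuad Q.component x b y z) :=
  decidable_of_iff _ Q.isBaerQuad_iff.symm

end BaerQuads

section CountBaerSubgroups

variable {K : Type*} [AddCommGroup K] [LinearOrder K] [Fintype K] (Q : SpreadSet K) {x : K × K}

/-- Numbers `i`, `j`, `k` and a slope `t` such that the points `b = i` of the component of `x` and
`y = j`, `z = k` of the component `t` complete `x` to a Baer quadruple. Of the two vectors `v` and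
`v + x`, only the one with the smaller first coordinate may be `b` or `y`. -/
def quadParams (x : K × K) : Finset (Σ _ : K, Σ _ : Option K, Σ _ : K, K) :=
  ({i | i ≠ 0 ∧ (Q.componentPoint (Q.slope x) i).1 < (Q.componentPoint (Q.slope x) i).1 + x.1 ∧
      x ≠ Q.componentPoint (Q.slope x) i} : Finset K).sigma fun i =>
    ({t | Q.slope x ≠ t} : Finset (Option K)).sigma fun t =>
      ({j | j ≠ 0 ∧ (Q.componentPoint t j).1 < (Q.componentPoint t j).1 + x.1} : Finset K).sigma
        fun j => {k | k ≠ 0 ∧ j ≠ k ∧ Q.IsRegularQuad x (Q.componentPoint (Q.slope x) i)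
          (Q.componentPoint t j) (Q.componentPoint t k)}

theorem ncard_baerQuadTriples_le [Nontrivial K] :
    (baerQuadTriples Q.component {v | v.1 < v.1 + x.1} x).ncard ≤ (Q.quadParams x).card := by
  rw [← Set.ncard_coe_finset]
  refine (Set.ncard_le_ncard ?_).trans (Set.ncard_image_le (f := fun p =>
    (Q.componentPoint (Q.slope x) p.1, Q.componentPoint p.2.1 p.2.2.1,
      Q.componentPoint p.2.1 p.2.2.2)))
  rintro ⟨b, y, z⟩ ⟨hbT, hyT, h⟩
  obtain ⟨⟨_, hb₀, hxb⟩, ⟨hy₀, hz₀, hyz⟩, hy, hb, hz, hreg⟩ := Q.isBaerQuad_iff.mp h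
  obtain ⟨i, hi⟩ := Q.exists_componentPoint_eq hb
  obtain ⟨j, hj⟩ := Q.exists_componentPoint_eq (Q.mem_component_slope y)
  obtain ⟨k, hk⟩ := Q.exists_componentPoint_eq hz
  refine ⟨⟨i, Q.slope y, j, k⟩, ?_, Prod.ext hi (Prod.ext hj hk)⟩
  have ne_zero {s : Option K} {l : K} {v : K × K} (h : Q.componentPoint s l = v) (hv : v ≠ 0) :
      l ≠ 0 := by
    rintro rfl
    exact hv (h ▸ Q.componentPoint_zero s)
  simp only [quadParams, Finset.coe_sigma, Set.mem_sigma_iff, Finset.coe_filter_univ,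
    Set.mem_ofPred_eq, hi, hj, hk]
  refine ⟨⟨ne_zero hi hb₀, hbT, hxb⟩, fun h => hy (h ▸ Q.mem_component_slope y),
    ⟨ne_zero hj hy₀, hyT⟩, ne_zero hk hz₀, fun h => hyz ?_, hreg⟩
  exact (hj.symm.trans (congrArg _ h)).trans hk

variable [Module (ZMod 2) K]

theorem six_mul_ncard_baerSubgroups_le [Nontrivial K] (hx : x.1 ≠ 0) :
    6 * (baerSubgroups Q.component 4 x).ncard ≤ (Q.quadParams x).card := by
  refine le_trans ?_ Q.ncard_baerQuadTriples_le
  refine _root_.six_mul_ncard_baerSubgroups_le Q.isGroupPartition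
    (fun h => hx (congrArg Prod.fst h)) fun v => ?_
  have hne : v.1 + x.1 ≠ v.1 := fun h => hx (add_eq_left.mp h)
  rw [Set.mem_ofPred_eq, Set.mem_ofPred_eq, Prod.fst_add, add_assoc, ZModModule.add_self, add_zero,
    not_lt, hne.le_iff_lt]

end CountBaerSubgroups

end SpreadSet

section BaerQuadLists

variable {ι V : Type*} [AddCommGroup V] {C : ι → AddSubgroup V}

/-- Four vectors, listed as candidates for `IsBaerQuad`. -/
structure Quad (V : Type*) where
  (x b y z : V)

namespace Quad

/-- The sixteen elements of `quadSpan`, with repetitions if the quadruple is linearly dependent. -/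
def elements (c : Quad V) : List V :=
  [0, c.x, c.b, c.x + c.b].flatMap fun p => [0, c.y, c.z, c.y + c.z].map fun r => p + r

/-- The elements of `quadSpan` as the bits of a natural number, bit `code v` standing for `v`. -/
def mask (code : V → ℕ) (c : Quad V) : ℕ :=
  c.elements.foldr (fun v n => 1 <<< code v ||| n) 0

theorem testBit_mask {code : V → ℕ} {c : Quad V} {i : ℕ} :
    (c.mask code).testBit i ↔ ∃ v ∈ c.elements, code v = i := by
  unfold mask
  induction c.elements with
  | nil => simp
  | cons v l ih =>
    rw [List.foldr_cons, Nat.testBit_or, Bool.or_eq_true, ih]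
    simp [Nat.one_shiftLeft, Nat.testBit_two_pow]

variable [Module (ZMod 2) V]

theorem mem_elements_iff {c : Quad V} {v : V} :
    v ∈ c.elements ↔ v ∈ quadSpan c.x c.b c.y c.z := by
  simp only [elements, mem_quadSpan_iff, List.mem_flatMap, List.mem_map, List.mem_cons,
    List.not_mem_nil, or_false]

theorem testBit_mask_iff_mem {code : V → ℕ} (hcode : code.Injective) {c : Quad V} {v : V} :
    (c.mask code).testBit (code v) ↔ v ∈ quadSpan c.x c.b c.y c.z := by
  simp [testBit_mask, hcode.eq_iff, mem_elements_iff]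

theorem mask_eq_of_quadSpan_eq {code : V → ℕ} {c d : Quad V}
    (h : quadSpan c.x c.b c.y c.z = quadSpan d.x d.b d.y d.z) : c.mask code = d.mask code :=
  Nat.eq_of_testBit_eq fun i =>
    Bool.eq_iff_iff.mpr (by simp only [testBit_mask, mem_elements_iff, h])

end Quad

theorem countP_testBit_mask_le_ncard [Finite V] [Module (ZMod 2) V] (hC : IsGroupPartition C)
    {code : V → ℕ} (hcode : code.Injective) {L : List (Quad V)}
    (hL : ∀ c ∈ L, IsBaerQuad C c.x c.b c.y c.z)
    (hmask : (L.map (Quad.mask code)).IsChain (· < ·)) (x : V) :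
    (L.map (Quad.mask code)).countP (fun n => n.testBit (code x)) ≤
      (baerSubgroups C 4 x).ncard := by
  classical
  set F := L.filter fun c => (c.mask code).testBit (code x) with hF
  have nodup : (F.map fun c => quadSpan c.x c.b c.y c.z).Nodup := by
    refine List.Pairwise.sublist (List.filter_sublist.map _) (List.pairwise_map.mpr ?_)
    exact (List.pairwise_map.mp (List.isChain_iff_pairwise.mp hmask)).imp fun h h' =>
      h.ne (Quad.mask_eq_of_quadSpan_eq h')
  calc (L.map (Quad.mask code)).countP (fun n => n.testBit (code x))
      = (F.map fun c => quadSpan c.x c.b c.y c.z).toFinset.card := by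
        rw [List.toFinset_card_of_nodup nodup, List.countP_map, List.length_map, hF,
          ← List.countP_eq_length_filter]
        rfl
    _ ≤ (baerSubgroups C 4 x).ncard := by
        rw [← Set.ncard_coe_finset]
        refine Set.ncard_le_ncard fun B hB => ?_
        simp only [List.coe_toFinset, List.mem_map, hF, List.mem_filter, Set.mem_ofPred_eq,
          Quad.testBit_mask_iff_mem hcode] at hB
        obtain ⟨c, ⟨hc, hx⟩, rfl⟩ := hB
        exact ⟨(hL c hc).isBaerSubgroup hC, hx⟩

end BaerQuadLists

namespace SpreadSet

section MinBaerCount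

variable {K : Type*} [AddCommGroup K] {Q R : SpreadSet K}

/-- The least number of Baer subgroups of order `q ^ 2` through a nonzero vector. It is a
collineation invariant of planes whose only Fano line is the line at infinity. -/
noncomputable def minBaerCount (Q : SpreadSet K) (q : ℕ) : ℕ :=
  ⨅ v : {v : K × K // v ≠ 0}, (baerSubgroups Q.component q v.1).ncard

theorem minBaerCount_le {q k : ℕ} {v : K × K} (hv : v ≠ 0)
    (h : (baerSubgroups Q.component q v).ncard ≤ k) : Q.minBaerCount q ≤ k :=
  (ciInf_le (OrderBot.bddBelow _) ⟨v, hv⟩).trans h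

variable [Nontrivial K]

theorem le_minBaerCount {q k : ℕ}
    (h : ∀ v, v ≠ 0 → k ≤ (baerSubgroups Q.component q v).ncard) : k ≤ Q.minBaerCount q :=
  have : Nonempty {v : K × K // v ≠ 0} := nonempty_subtype.mpr (exists_ne 0)
  le_ciInf fun v => h v v.2

variable [Finite K]

theorem minBaerCount_le_of_incidenceIso (e : IncidenceIso Q.Incid R.Incid)
    (he : e.line .infty = .infty) (q : ℕ) : Q.minBaerCount q ≤ R.minBaerCount q := by
  obtain ⟨φ, σ, hφ, hσ, h⟩ := exists_addMonoidHom e he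
  refine le_minBaerCount fun w hw => ?_
  obtain ⟨v, rfl⟩ := Finite.injective_iff_surjective.mp hφ w
  refine minBaerCount_le (v := v) (fun hv => hw (by rw [hv, map_zero])) ?_
  exact ncard_baerSubgroups_le Q.isGroupPartition R.isGroupPartition hφ hσ h q v

theorem minBaerCount_eq_of_incidenceIso (e : IncidenceIso Q.Incid R.Incid)
    (he : e.line .infty = .infty) (q : ℕ) : Q.minBaerCount q = R.minBaerCount q :=
  le_antisymm (minBaerCount_le_of_incidenceIso e he q)
    (minBaerCount_le_of_incidenceIso e.symm (e.line.symm_apply_eq.mpr he.symm) q)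

end MinBaerCount

end SpreadSet

namespace SpreadSet

section Desarguesian

open Coord

variable {K : Type*} [DivisionRing K]

/-- The Desarguesian spread set, whose translation plane is the projective plane over `K`. -/
def ofDivisionRing (K : Type*) [DivisionRing K] : SpreadSet K where
  mul := AddMonoidHom.mulLeft
  div y x := y / x
  mul_div y _ hx := div_mul_cancel₀ y hx
  div_mul m _ hx := mul_div_cancel_right₀ m hx

section Inversion

variable [DecidableEq K]

/-- The map `(x, y) ↦ (1 / x, y / x)`, extended to the projective plane. -/
def invertPoint : Coord K → Coord K
  | pair x y => if x = 0 then single y else pair x⁻¹ (y * x⁻¹)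
  | single m => pair 0 m
  | infty => infty

/-- The action of `invertPoint` on lines, which exchanges `[0]` and `[∞]`. -/
def invertLine : Coord K → Coord K
  | pair m b => pair (-b) (-m)
  | single c => if c = 0 then infty else single c⁻¹
  | infty => single 0

theorem invertPoint_involutive : Function.Involutive (invertPoint (K := K)) := by
  rintro (⟨x, y⟩ | _ | _)
  · by_cases hx : x = 0 <;> simp [invertPoint, hx]
  all_goals simp [invertPoint]

theorem invertLine_involutive : Function.Involutive (invertLine (K := K)) := by
  rintro (_ | c | _)
  · simp [invertLine]
  · by_cases hc : c = 0 <;> simp [invertLine, hc]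
  · simp [invertLine]

theorem incid_invert (p l : Coord K) :
    Coord.Incid (· * ·) (invertPoint p) (invertLine l) ↔ Coord.Incid (· * ·) p l := by
  rcases p with ⟨x, y⟩ | m' | _ <;> rcases l with ⟨m, b⟩ | c | _
  · by_cases hx : x = 0
    · simp [invertPoint, invertLine, hx, Coord.Incid, eq_neg_iff_add_eq_zero]
    · simp only [invertPoint, invertLine, hx, if_false, Coord.Incid]
      rw [← mul_left_inj' hx, add_mul, neg_mul, neg_mul, neg_mul, inv_mul_cancel_right₀ hx,
        mul_assoc b, inv_mul_cancel₀ hx, mul_one, add_neg_eq_iff_eq_add, neg_add_eq_sub,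
        eq_sub_iff_add_eq]
  all_goals simp only [invertPoint, invertLine]
  · by_cases hx : x = 0 <;> by_cases hc : c = 0 <;> simp [hx, hc, Coord.Incid, eq_comm]
  · by_cases hx : x = 0 <;> simp [hx, Coord.Incid]
  · simp [Coord.Incid, add_neg_eq_zero]
  · by_cases hc : c = 0 <;> simp [hc, Coord.Incid, eq_comm]
  · simp [Coord.Incid]
  · simp [Coord.Incid]
  · by_cases hc : c = 0 <;> simp [hc, Coord.Incid]
  · simp [Coord.Incid]

/-- The collineation `(x, y) ↦ (1 / x, y / x)` of the projective plane over `K`. -/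
def inversion : IncidenceIso (ofDivisionRing K).Incid (ofDivisionRing K).Incid where
  point := invertPoint_involutive.toPerm
  line := invertLine_involutive.toPerm
  incid_iff := incid_invert

end Inversion

theorem isEmpty_incidenceIso_ofDivisionRing {K' : Type*} [AddCommGroup K'] {R : SpreadSet K'}
    [Finite K] [Module (ZMod 2) K] (hR : ∀ l, IsFanoLine R.Incid l → l = infty) :
    IsEmpty (IncidenceIso (ofDivisionRing K).Incid R.Incid) where
  false e := by
    classical
    have h : IsFanoLine (ofDivisionRing K).Incid infty := isFanoLine_infty
    have h₁ := hR _ (h.map e)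
    have h₂ := hR _ ((h.map inversion).map e)
    exact nomatch e.line.injective (h₁.trans h₂.symm)

end Desarguesian

end SpreadSet

section Nibbles

/-- The additive group of `𝔽₂⁴`, with addition the bitwise exclusive or. -/
def Nibble : Type := Fin 16

namespace Nibble

instance : LinearOrder Nibble := inferInstanceAs (LinearOrder (Fin 16))

instance : Fintype Nibble := inferInstanceAs (Fintype (Fin 16))

instance : Nontrivial Nibble := inferInstanceAs (Nontrivial (Fin 16))

-- The kernel evaluates this instance much faster than the one that `Fintype` provides.
instance {p : Nibble → Prop} [h : DecidablePred p] : Decidable (∀ a, p a) :=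
  @Nat.decidableForallFin 16 p h

instance : Zero Nibble := ⟨(0 : Fin 16)⟩

instance : Add Nibble := ⟨fun a b => Fin.ofNat 16 (a.val ^^^ b.val)⟩

theorem add_self (a : Nibble) : a + a = 0 := by
  revert a
  decide

instance : Neg Nibble := ⟨id⟩

instance : AddCommGroup Nibble where
  add_assoc := by decide +kernel
  zero_add := by decide
  add_zero := by decide
  neg_add_cancel := add_self
  add_comm := by decide +kernel
  nsmul := nsmulRec
  zsmul := zsmulRec

instance : Module (ZMod 2) Nibble :=
  AddCommGroup.zmodModule fun a => (two_nsmul a).trans a.add_self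

/-- The entry `(i, j)` of a table of nibbles, whose rows are given in hexadecimal. -/
def table (rows : List ℕ) (i j : Nibble) : Nibble :=
  Fin.ofNat 16 (rows.getD i.val 0 >>> (60 - 4 * j.val))

instance : Mul Nibble :=
  ⟨table [0x0000000000000000, 0x0123456789abcdef, 0x02468ace3175b9fd, 0x0365cfa9b8de7412,
    0x048c37bf62ea51d9, 0x05af72d8eb419c36, 0x06cabd71539fe824, 0x07e9f816da3425cb,
    0x083b6e5dc4f7a291, 0x09182b3a4d5c6f7e, 0x0a7de493f5821b6c, 0x0b5ea1f47c29d683,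
    0x0cb759e2a61df348, 0x0d941c852fb63ea7, 0x0ef1d32c97684ab5, 0x0fd2964b1ec3875a]⟩

instance : Inv Nibble := ⟨fun a => table [0x019edb76f2c5a438] 0 a⟩

/-- The field `𝔽₂[t] / (t⁴ + t + 1)`, with the bits of a nibble as coefficients. -/
instance : Field Nibble where
  one := (1 : Fin 16)
  mul_assoc := by decide +kernel
  mul_comm := by decide +kernel
  one_mul := by decide +kernel
  mul_one := by decide +kernel
  left_distrib := by decide +kernel
  right_distrib := by decide +kernel
  zero_mul := by decide +kernel
  mul_zero := by decide +kernel
  exists_pair_ne := exists_pair_ne Nibble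
  mul_inv_cancel := by decide +kernel
  inv_zero := by decide +kernel
  nnqsmul := _
  nnqsmul_def := fun _ _ => rfl
  qsmul := _
  qsmul_def := fun _ _ => rfl

end Nibble

end Nibbles

section SpreadSets

open Nibble

/-- The spread set with multiplication table `mul`; row `x` of `div` lists the quotients `y / x`. -/
def SpreadSet.ofTables (mul div : List ℕ)
    (mul_add : ∀ m x y, table mul m (x + y) = table mul m x + table mul m y)
    (mul_div : ∀ x, x ≠ 0 → ∀ y, table mul (table div x y) x = y)
    (div_mul : ∀ x, x ≠ 0 → ∀ m, table div x (table mul m x) = m) : SpreadSet Nibble where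
  mul m := .mk' (table mul m) (mul_add m)
  div y x := table div x y
  mul_div y {x} hx := mul_div x hx y
  div_mul m {x} hx := div_mul x hx m

/-- A spread set of the semifield plane with kernel `𝔽₄`. -/
def semifieldKernelFour : SpreadSet Nibble := .ofTables
  [0x0000000000000000, 0x0123456789abcdef, 0x0264cea8dfb91375, 0x038bfc7456dea921,
   0x04c8d915ea2637fb, 0x05728dfa6314eb9c, 0x06f9718e35ca42bd, 0x07da34e9bc618f52,
   0x08e6b35d917f2ac4, 0x094d6f2b185c7e3a, 0x0ab128934ef56cd7, 0x0b5e1a4fc792d683,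
   0x0c3fe2d17b4895a6, 0x0d1ca7b6f2e35849, 0x0e975bc2a43df168, 0x0fa5963c2d87b41e]
  [0x0000000000000000, 0x0123456789abcdef, 0x0d1c9b253efa4786, 0x0a512f8e4673d9bc,
   0x0ba71e965fd824c3, 0x06c871fda4be3529, 0x049fb8136a2dec75, 0x0cea34d12759f86b,
   0x09f6a35c18e7b24d, 0x08d5e63b914c7fa2, 0x054ec978fb1263da, 0x07bd5a4fc2619e38,
   0x02846da97c3f1b5e, 0x0e62fcb4d385a197, 0x0f39d7e2b5c68a14, 0x037b82caed9456f1]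
  (by decide +kernel) (by decide +kernel) (by decide +kernel)

/-- A spread set of the Hall plane. -/
def hall : SpreadSet Nibble := .ofTables
  [0x0000000000000000, 0x0123456789abcdef, 0x0231ecdf75469ba8, 0x0374cfb8ed9a2156,
   0x04d973aec815bf62, 0x05fa36c941be728d, 0x068ef971ac2453db, 0x07cbda1634f8e925,
   0x08a2913bf75d6ec4, 0x094d185c2b6f3a7e, 0x0a6c82e45f39d7b1, 0x0be56d83927cf41a,
   0x0cb72e956ad148f3, 0x0d58a7f2b6e31c49, 0x0e1f5b4ad3c28697, 0x0f96b42d1e87a53c]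
  [0x0000000000000000, 0x0123456789abcdef, 0x0e129da36f8c74b5, 0x02813bfcd457a96e,
   0x09c51eb4a8df3726, 0x08a4f15d967e2bc3, 0x07f8e916bc4352ad, 0x06dbac7135e89f42,
   0x0f975ac21b6d4e38, 0x05be72d841c963fa, 0x046a289bf315ecd7, 0x0ced642f7a31b859,
   0x0d39c685e2f41a7b, 0x0356bfeac792d184, 0x0b7fd3495e2a861c, 0x0a4c873e2db6f591]
  (by decide +kernel) (by decide +kernel) (by decide +kernel)

/-- A spread set of the Johnson–Walker plane, the transpose of the Lorimer–Rahilly plane. -/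
def johnsonWalker : SpreadSet Nibble := .ofTables
  [0x0000000000000000, 0x0123456789abcdef, 0x02cedf139b57468a, 0x0365a9cfb8de1274,
   0x048c62ea159d73fb, 0x05148d9c2736afbe, 0x06e817f9ca24db35, 0x07adf85243e9bc16,
   0x083be6d57f4c91a2, 0x09b23a81d46fe75c, 0x0ad7934e6cb1f528, 0x0b4f7c385e1a296d,
   0x0c592e7ba6f384d1, 0x0d7ac1b6f2853e49, 0x0ef15ba43dc26897, 0x0f96b42de1785ac3]
  [0x0000000000000000, 0x0123456789abcdef, 0x0518bc3d4f792a6e, 0x0e9153fa6cd8472b,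
   0x06c91e4b5a3fd287, 0x0d4af186739eb5c2, 0x02fba71c95ed3846, 0x0972e8d1b64c5fa3,
   0x045e7ba812c369fd, 0x0fd794c53162aeb8, 0x0b65829fd41ae37c, 0x0aec6d52f7b18439,
   0x03bd2fe4c857169a, 0x0834ca29ebf671d5, 0x07a6d9b32e85fc14, 0x0c8f367ead249b51]
  (by decide +kernel) (by decide +kernel) (by decide +kernel)

/-- A spread set of the derived semifield plane. -/
def derivedSemifield : SpreadSet Nibble := .ofTables
  [0x0000000000000000, 0x0123456789abcdef, 0x02df31eca8759b46, 0x0347eda91256fcb8,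
   0x0462fb9dea8c1573, 0x05beaf149c27368d, 0x06ac248e53f971db, 0x07f8bc43619eda25,
   0x08c419d57fb36ea2, 0x09817ef6c54db23a, 0x0a3982b1d7e45f6c, 0x0be5d638f41a29c7,
   0x0c1d6a7b2e3f4859, 0x0d7a582fb6c1e394, 0x0e5b97c23d68a4f1, 0x0f96c35a4bd2871e]
  [0x0000000000000000, 0x0123456789abcdef, 0x0c1a3e4d9f6582b7, 0x09418bf37ade6c52,
   0x08621dc9ae57fb34, 0x02af61bed8c47395, 0x05db7f1c643ae829, 0x0ae75891b3fc246d,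
   0x03cef678152d9a4b, 0x0736b9da214f5ec8, 0x0b5c93e24718dfa6, 0x0df8a235e6b1497c,
   0x04b5ca86f2e917d3, 0x069de45fcb72318a, 0x0f792ca45d83b61e, 0x0e84d72b3c96a5f1]
  (by decide +kernel) (by decide +kernel) (by decide +kernel)

/-- A spread set of the Lorimer–Rahilly plane. -/
def lorimerRahilly : SpreadSet Nibble := .ofTables
  [0x0000000000000000, 0x0123456789abcdef, 0x02ce31fd9b57a864, 0x038b129a47cf56de,
   0x0437bf8cae9d1526, 0x0572d8af6314bec9, 0x069fac3571e8db42, 0x07da9e43f82561bc,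
   0x084c5d192a6e7f3b, 0x09f62bd4c53ae718, 0x0ae4c6285fb1937d, 0x0ba1f45ed67c2983,
   0x0c1d6a7be2f38495, 0x0d58e3b61c49f2a7, 0x0eb579c23d864af1, 0x0f6987e1b4d23c5a]
  [0x0000000000000000, 0x0123456789abcdef, 0x0c148df536be27a9, 0x0b51ae94df738c26,
   0x039218cef764a5db, 0x023db1af5ec96874, 0x08a67b1c435de9f2, 0x0fe796d1a83c42b5,
   0x0d8e3a56124f9bc7, 0x06c5f9b37182de4a, 0x0579d28be41a3f6c, 0x0afc57e26d91b483,
   0x04bfe378ca25169d, 0x07dac4392be6f158, 0x09486f2abcd7531e, 0x0e6b2c4d95f87a31]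
  (by decide +kernel) (by decide +kernel) (by decide +kernel)

/-- A spread set of the Dempwolff plane. -/
def dempwolff : SpreadSet Nibble := .ofTables
  [0x0000000000000000, 0x0123456789abcdef, 0x0275ceb9a8df6413, 0x03fc12ed47b856a9,
   0x049d51c8fb62ae37, 0x05afd872369ceb41, 0x06caf935bd71428e, 0x0734ad9e25168fbc,
   0x086e2a4c91f7b3d5, 0x0918e7f6d4c53a2b, 0x0a82931b6ce4f57d, 0x0bd67ca15e8329f4,
   0x0cb73f84e259d16a, 0x0d496b2f7a3e1c58, 0x0e5b86d31f4a97c2, 0x0fe1b45ac32d7896]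
  [0x0000000000000000, 0x0123456789abcdef, 0x0917de82a45c6bf3, 0x0fa172bc9d6e3485,
   0x038c14dbea7f2596, 0x043af1e9568db72c, 0x0ad68f15c7b24e39, 0x0b5ec69142fa837d,
   0x0e753bad1826f9c4, 0x08cf975321d4a6be, 0x07fdec46b51392a8, 0x064ba9783ce15fd2,
   0x0db9632f7e481c5a, 0x0c682a3efb95d147, 0x02945dca6f37e81b, 0x05e2b8f4d3c97a61]
  (by decide +kernel) (by decide +kernel) (by decide +kernel)

/-- A spread set of the semifield plane with kernel `𝔽₂`. -/
def semifieldKernelTwo : SpreadSet Nibble := .ofTables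
  [0x0000000000000000, 0x0123456789abcdef, 0x02dfce13578a9b46, 0x0374a9deb8cf1265,
   0x049d51c8fb62ae37, 0x05c936fa72be418d, 0x068ebd359f1724ac, 0x0761dabc2543f89e,
   0x08a2f75d4ce6b319, 0x09e76f813ad45cb2, 0x0af51be4c639d728, 0x0b1a83926d7ce5f4,
   0x0c48e2a6d1953f7b, 0x0db6942fe3587ac1, 0x0e5b2c79a4f186d3, 0x0f3c784b1e2d695a]
  [0x0000000000000000, 0x0123456789abcdef, 0x0b1fce73648d529a, 0x07813ad9c5bef462,
   0x0ae5149fbd3627c8, 0x04cbd158f37ae629, 0x02d6f81e9bc743a5, 0x09b2a6c14e5f783d,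
   0x0f7982b516e3acd4, 0x0c5de7a231948bf6, 0x06fa7d4b2c15398e, 0x0e479c86da21bf53,
   0x036c59fde2481ab7, 0x05386bea7fd2914c, 0x08a42f3c5769de1b, 0x0d9eb324a8fc6571]
  (by decide +kernel) (by decide +kernel) (by decide +kernel)

end SpreadSets

section BaerSubgroupCounts

namespace Nibble

/-- The position of a vector in the lexicographic order of `𝔽₂⁴ × 𝔽₂⁴`. -/
def code (v : Nibble × Nibble) : ℕ := 16 * v.1.val + v.2.val

theorem code_injective : code.Injective := by
  rintro ⟨a, b⟩ ⟨c, d⟩ h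
  have hb := b.isLt
  have hd := d.isLt
  have h : 16 * a.val + b.val = 16 * c.val + d.val := h
  have hac : a.val = c.val := by omega
  have hbd : b.val = d.val := by omega
  exact Prod.ext (Fin.ext hac) (Fin.ext hbd)

/-- The vector whose code is the last byte of `n`. -/
def decode (n : ℕ) : Nibble × Nibble := (Fin.ofNat 16 (n >>> 4), Fin.ofNat 16 n)

end Nibble

/-- The quadruple whose vectors are coded by the four bytes of `w`. -/
def Quad.ofWord (w : ℕ) : Quad (Nibble × Nibble) :=
  ⟨Nibble.decode (w >>> 24), Nibble.decode (w >>> 16), Nibble.decode (w >>> 8), Nibble.decode w⟩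

namespace SpreadSet

variable {Q : SpreadSet Nibble} {k : ℕ}

theorem minBaerCount_le_of_card_quadParams (v : Nibble × Nibble) (hv : v.1 ≠ 0)
    (h : (Q.quadParams v).card ≤ 6 * k) : Q.minBaerCount 4 ≤ k := by
  refine minBaerCount_le (v := v) (fun hv₀ => hv (congrArg Prod.fst hv₀)) ?_
  have := Q.six_mul_ncard_baerSubgroups_le hv
  lia

theorem le_minBaerCount_of_words (L : List ℕ)
    (hL : ∀ c ∈ L.map Quad.ofWord, IsBaerQuad Q.component c.x c.b c.y c.z)
    (hmask : ((L.map Quad.ofWord).map (Quad.mask Nibble.code)).IsChain (· < ·))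
    (hk : ∀ a b, (a, b) ≠ (0 : Nibble × Nibble) →
      k ≤ ((L.map Quad.ofWord).map (Quad.mask Nibble.code)).countP
        fun n => n.testBit (Nibble.code (a, b))) : k ≤ Q.minBaerCount 4 :=
  le_minBaerCount fun v hv => (hk v.1 v.2 hv).trans
    (countP_testBit_mask_le_ncard Q.isGroupPartition Nibble.code_injective hL hmask v)

end SpreadSet

theorem le_minBaerCount_semifieldKernelFour : 21 ≤ semifieldKernelFour.minBaerCount 4 :=
  SpreadSet.le_minBaerCount_of_words
  [0x673b6138, 0x6728612c, 0x30506138, 0x346a675c, 0x266a674f, 0x33553158, 0x346a625f, 0x33555168,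
   0x3050673b, 0x673b3158, 0x3355345e, 0x5365643e, 0x22446728, 0x3050345e, 0x6728436e, 0x6138546e,
   0x5168546e, 0x325d5168, 0x20406728, 0x6138325d, 0x346a326f, 0x3050325d, 0x3355673b, 0x1374167e,
   0x10801385, 0x9118971b, 0x10801188, 0x149a8316, 0x149a9386, 0x1080178b, 0x11889315, 0x1385148e,
   0x8395178b, 0x11888395, 0x1080148e, 0x9315178b, 0x8198849e, 0x128d9315, 0x128d8395, 0x1188128d,
   0x1080128d, 0x128d1385, 0x229996be, 0x10a013ad, 0x70b0c375, 0xc178c47e, 0x70b0c178, 0x74cab179,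
   0x96ca5195, 0xc4ba73c6, 0x74cac3b6, 0x77bbb1c8, 0xc375c77b, 0xc17874be, 0x77bbc47e, 0xb47ac2bf,
   0x70b074be, 0x77bbc178, 0xb47ab179, 0xc375c47e, 0x408085ca, 0xc178b3c5, 0x70b0c27d, 0xb47ac7bc,
   0xe2d9e5df, 0x7090e274, 0x40a043a6, 0xe7abe2ad, 0x40a0a1e9, 0xe7ab43e5, 0x30d0e23b, 0xe2ada74b,
   0x40a0e74c, 0xe7aba148, 0x42eda44e, 0x43e5a74b, 0x44aae24f, 0x40a044aa, 0x33dde23b, 0x44aaa7ec,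
   0x44aa47ac, 0xa24de3a5, 0xa24d47eb, 0xe2d9d738, 0xa24da148, 0x20d0128d, 0x609012b9, 0x20d03355,
   0x20d0345e, 0x20d09315, 0x20d08395, 0x20d0e7ab, 0x20d06138, 0x30c0674f, 0x20d0a148, 0x20d074be,
   0x20d0673b, 0x20d077bb, 0x20d0623d, 0x20d044ee, 0x20d0a24d, 0x709011dd, 0x1020c14c, 0x10a0f174,
   0x1080f128, 0x1278f15c, 0x128df128, 0xf15c15ce, 0x26b9f1ad, 0xf128148e, 0xf128b4ce, 0xf15c83ba,
   0x2299d334, 0xf15c9327, 0x70b0f128, 0x3050c178, 0x3344f15c, 0xf15cb68e, 0x3355f128, 0xf128c375,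
   0xf15cc4eb, 0x60b0f15c, 0x346af1d9, 0x4080f1ad, 0x6688f1ad, 0x44aaf1d9, 0x266af185, 0xf15c759a,
   0xf128a24d, 0x40a0129f, 0x266a13be, 0x77bb1385, 0x10a0e2d9, 0x1080e2ad, 0x1188b4ce, 0x149a5139,
   0xe7ab74be, 0xa148c47e, 0xf22d9118, 0x346a47ac, 0x672851c4, 0x3355c178, 0x70b0325d, 0x96cad7ef,
   0x3050a24d, 0x40a01396, 0x709013d9, 0x1188345e, 0x1144e23b, 0x11cce296, 0x1080e3a5, 0xc178325d,
   0x70b03355, 0x3050c375, 0x672815ce, 0xe7ab148e, 0x77bba148, 0x8198f325, 0xb47a47ac, 0x44aa6159,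
   0x74caa2ef, 0x40a0149a, 0x673b9315, 0xe2d9167e, 0x5168178b, 0x108074be, 0x128db1c8, 0x4080d334,
   0xe7ab1385, 0x229985ca, 0x325df42e, 0x3355a148, 0x3050c47e, 0x47ebf42e, 0xc375f42e, 0x70b044ee,
   0x55bb6728, 0xc178a24d, 0x40a03366, 0xd3f5e2ad, 0xf578e23b, 0xf5abe274, 0x3050d3f5, 0x1188d3f5,
   0x11ccf55e, 0xf5ab13d9, 0xd3f5673b, 0xd3f5a148, 0x77bbd3f5, 0xd3f56138, 0xd3f574be, 0xd3f59118,
   0x44aad326, 0xd3f5a24d, 0x40a0c3b6, 0x346a179c, 0xc178e2ad, 0xe2d96175, 0x70b09315, 0x128dc77b,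
   0x30501385, 0x10803355, 0x1188e7ab, 0x623d41e8, 0x34b96728, 0x47ebb1c8, 0x5168a74b, 0x6138b4ce,
   0x44aa675c, 0x77bba24d, 0x40a0179c, 0x7090674f, 0x74ca8316, 0x66aae2d9, 0xe274614d, 0xe2ad9315,
   0x149ab179, 0x13d9654b, 0x128db4ce, 0x1188546e, 0x11cc85be, 0x108077bb, 0x346ac3b6, 0xa148c27d,
   0xc1785365, 0x70b047eb, 0x3050a74b, 0x44aa326f, 0xf128f22d, 0xf5abf1ad, 0x40a09189, 0x3050b1c8,
   0x3355e2ad, 0xe2d9c38e, 0x74ca326f, 0xb2cd879b, 0x77bb345e, 0x5080e79f, 0xe7abb4ce, 0x70b01188,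
   0x128d673b, 0x138547eb, 0x149aa7ec, 0x9315c47e, 0x44aa8316, 0xa24d178b, 0x40a0c1b9, 0xe2adc375,
   0x2050e2d9, 0xc4ba43a6, 0xc77b643e, 0xe7ab73b5, 0x30501188, 0x1080a148, 0x1385325d, 0x3355128d,
   0x346a9386, 0x6728a214, 0x77bb148e, 0x44aa179c, 0xa24db4ce, 0x20d0f128, 0x40a0c4ba, 0x24fa978c,
   0xc15ee2d9, 0xe2ad9118, 0x6728d2ac, 0x70b0546e, 0xc178673b, 0x6138c27d, 0xe7abc375, 0x77bb128d,
   0x1385a148, 0x1080345e, 0x118847eb, 0x325d8395, 0x3355178b, 0x305044ee, 0xa24d9315, 0xd3f524de,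
   0xf15cf254, 0x40a077cc, 0xd7fb5365, 0xe2add7fb, 0x40802299, 0x346ad72c, 0x3355d7fb, 0xd7fb325d,
   0x74cad72c, 0xd33496be, 0x3050e7ab, 0x1374a259, 0x1385d7fb, 0xc1126728, 0x128dd7fb, 0x1188d7fb,
   0x1080d7fb, 0x70b0673b, 0xc178d7fb, 0x85caa259, 0x44aad72c, 0xd7fbf42e, 0xd7fbf22d, 0x40a0675c,
   0x672886fc, 0x27db546e, 0xe2ad27db, 0x613827db, 0xc37527db, 0x27db43e5, 0xc17827db, 0x70b0e7ab,
   0x3355148e, 0x27db8395, 0x305077bb, 0x108027db, 0x118874be, 0x44aa129f, 0x346a1396, 0x27dbf22d,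
   0x20d0d7fb, 0x40a0326f, 0x3355b4ce, 0x3050e2ad, 0xe2d947fd, 0x77bbd2fd, 0xd2fd5365, 0x74cad22f,
   0xe7abd2fd, 0x9315d2fd, 0x673b148e, 0x6138d2fd, 0x6728c359, 0x1188c375, 0x1080d2fd, 0x44aac1b9,
   0x70b0128d, 0xd2fdf72b, 0xf128d2fd, 0x50a0f15c, 0xd3f527db, 0x40a0346a, 0xe2adb1c8, 0xe2d993b4,
   0xe3a571b8, 0x3050b4ce, 0x43e53158, 0x33996728, 0x77bb325d, 0xd33485ca, 0x3355e7ab, 0x408096be,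
   0xc375a148, 0xc1789315, 0x22991374, 0x108044ee, 0x1188673b, 0xd3f5f22d, 0x20d0f42e, 0xf12827db,
   0xd7fbd2fd, 0x40a022ff, 0x7788965c, 0x22ddc375, 0x7788264c, 0x70b022dd, 0x22ddc178, 0x22dd5168,
   0x22dd6138, 0x22dd673b, 0x22dde7ab, 0x22dd345e, 0x22dd9315, 0x22dd148e, 0x778813ad, 0x22dd1385,
   0x305022dd, 0x10a07788, 0x22ddf42e, 0x55aaf15c, 0x22ddd3f5, 0x22dd27db, 0x20d022dd, 0x22ddf72b]
  (by decide +kernel) (by decide +kernel) (by decide +kernel)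

theorem le_minBaerCount_hall : 11 ≤ hall.minBaerCount 4 :=
  SpreadSet.le_minBaerCount_of_words
  [0x1166136b, 0x15797167, 0x1060136b, 0x13786117, 0x1060156c, 0x13787167, 0x1060146a, 0x126d6176,
   0x126d7116, 0x1060126d, 0xb539b43e, 0x30803187, 0x34bab58c, 0x30803388, 0x33883187, 0x31b6833b,
   0xb48a833b, 0x32bd853c, 0x3080348e, 0x843a35bc, 0xb48a823d, 0xc29dc59c, 0x509091c7, 0x95c9c25f,
   0x50905398, 0x5599c25f, 0x95c991c7, 0xc29d53cb, 0x559994ce, 0xc55994ce, 0x5398c559, 0x559991c7,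
   0x5090c25f, 0x95c994ce, 0xe5a9e2af, 0x40a0a1e6, 0xa4eae54c, 0xa4eae24d, 0x40a043ab, 0x43e8a24f,
   0xa4eaa2ed, 0x44aaa5ec, 0x44aae54c, 0xa4eaa1e6, 0xe5a9a348, 0x40a0a2ed, 0x44aa43ab, 0x20d01166,
   0x20d0126d, 0x20d034ba, 0x20d09156, 0x20d043ab, 0x20d0955c, 0x20d053cb, 0x20d055cc, 0x20d044aa,
   0x40a01166, 0x10609156, 0x1378e2af, 0x126d34ba, 0xe5a9147e, 0x43e894ce, 0xb48a637b, 0x5599a44e,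
   0x83b8a549, 0x40a0126d, 0x55991378, 0x95c9f2df, 0xe5a9f2df, 0xf22d156c, 0x3388f2df, 0x3080c25f,
   0x40a0136b, 0x126db58c, 0x6176853c, 0xa1e6156c, 0x5599147e, 0x31b6c29d, 0x34ba9156, 0x44aac59c,
   0x40a0146a, 0x53981579, 0x7116e24d, 0x95c96117, 0x5599127f, 0x1378b539, 0xf42ac39b, 0x5090a44e,
   0xf42aa3eb, 0x338891c7, 0x308044ee, 0x31b6c59c, 0x40a055cc, 0x843a7116, 0x1166f52c, 0x1060955c,
   0x3388a44e, 0x9156f52c, 0x5090f5d9, 0x34baa2ed, 0xf22df52c, 0x40a031b6, 0x3080d127, 0x3388d127,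
   0x1060d1f6, 0x50901177, 0xd1f6945a, 0x5599d127, 0xd1f653cb, 0x44aa955c, 0x34ba156c, 0x1378c559,
   0x3388127f, 0x30801177, 0x95c943e8, 0x823da3eb, 0x843aa5ec, 0xb53994ce, 0x23f8c25f, 0x23f891c7,
   0x23f8e5a9, 0x23f8a147, 0x23f841e7, 0x23f81579, 0x559923f8, 0x631882bf, 0x51c6741a, 0xa1e6843a,
   0xc29d833b, 0x116634ba, 0x106055cc, 0xa4ea136b, 0x308095c9, 0x31b6146a, 0x44aa53cb, 0x33887167,
   0x6519529f, 0x3080d42e, 0xa1e632bd, 0x137891c7, 0x1060a4ea, 0x1166c59c, 0x509044ee, 0x157983b8,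
   0x23f8f5d9, 0xf22df126, 0x40a033bb, 0x95c9d328, 0x31b6d3fb, 0x5599d328, 0xa1e6d3fb, 0x34bad3fb,
   0x50901378, 0x1166a4ea, 0x1060d3fb, 0xd3286117, 0x146a9156, 0x40a0955c, 0x31b6637b, 0x3388a147,
   0x945a32bd, 0x146a43ab, 0x50901579, 0xa4ea7116, 0x1060b58c, 0x137884be, 0x23f8d127, 0x20d0f52c,
   0x3080d22f, 0x5398d22f, 0xe5a9d22f, 0x95c9348e, 0xd2fd41a6, 0x1166d2fd, 0x1060c29d, 0x44aa136b,
   0x5090127f, 0x23f8d22f, 0xd2fdf32b, 0xe24d51c6, 0xb53991c7, 0x5090b43e, 0xe5a924fe, 0xc29da1e6,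
   0x559943e8, 0x33886117, 0x95c91378, 0x106044aa, 0x116653cb, 0x20d0f42a, 0xf22dd3fb, 0x22ddb48a,
   0x22ddb58c, 0x22dde54c, 0x22dda1e6, 0x22dd843a, 0x22dd34ba, 0x22dd955c, 0x22dd31b6, 0x308022ff,
   0x22ddd1f6, 0x22dd23db]
  (by decide +kernel) (by decide +kernel) (by decide +kernel)

theorem le_minBaerCount_johnsonWalker : 9 ≤ johnsonWalker.minBaerCount 4 :=
  SpreadSet.le_minBaerCount_of_words
  [0x1020172a, 0x5618531a, 0x1040134a, 0x5214174f, 0x52141548, 0x1144174f, 0x15484157, 0x124d4157,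
   0x613e566d, 0x264a416f, 0x2255712b, 0x1060146e, 0x354a3448, 0x1080168c, 0xa28c862d, 0x2288a124,
   0x2080268b, 0xa58921a3, 0x8128842a, 0x8128a28c, 0x218286ab, 0x10a011aa, 0xc77a75bc, 0x73c4b67c,
   0x77bbb4cd, 0x73c475c9, 0xc77a72b9, 0x4488c14a, 0xb6cab4cd, 0x70b0c17f, 0x529594ce, 0xd69bd298,
   0x8458d78d, 0xe74ae14f, 0x30d0d2e7, 0xd6e834df, 0xb6ebe55a, 0xe338e237, 0x33dd34df, 0xd33ce2d5,
   0xd6e8d3ef, 0x10e02288, 0x10e05228, 0x10e08248, 0x50a0138b, 0x20d03598, 0x30c0e77f, 0x40b0c198,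
   0x10a0419a, 0x124de3db, 0x154872b9, 0x3388e7ad, 0x3080c1e7, 0x34eba28c, 0x33dda52c, 0x2288d3ef,
   0x20c0124d, 0x1144b6ca, 0xa5894157, 0x612c9317, 0xc49be74a, 0x77bbd63e, 0x842af29f, 0x73c481a9,
   0x50b0c1d2, 0x1040a3ca, 0xd298215d, 0x175875c9, 0x77bb1548, 0xd6e8b479, 0xa589c77a, 0xc7a98234,
   0xb6cad439, 0x6080d2f4, 0x1060f4be, 0x60b01155, 0x305073c4, 0x73e8f4be, 0x5588f44a, 0x60a0f48b,
   0x2040f4ad, 0x5214f59a, 0xe3f5843d, 0x10c0354a, 0xd6e8f56f, 0x73c4f56f, 0x8146f5db, 0x21b6f5cd,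
   0x77bb21a3, 0x61d6f58c, 0x22cc41b4, 0x33dd81a9, 0x77bb124d, 0x50801326, 0x108066cc, 0xc77aa28c,
   0x34eb9365, 0x228893f6, 0xc72872f6, 0xd29814a9, 0xa5895214, 0x1188354a, 0x1144a28c, 0x1020e74a,
   0xc14a9528, 0xa59b266c, 0xd33c72b9, 0xc77a21a3, 0x124dd13b, 0x40a0d259, 0x73c4e13d, 0xc14a576f,
   0x1144d63e, 0x1040d37a, 0x154823a4, 0xa31584cb, 0x33ddb67c, 0xd33c4157, 0x936564f8, 0x61fab4cd,
   0x61fa23a4, 0x10c0a5fa, 0x1060c43e, 0x1080d62c, 0x104033aa, 0x61faa28c, 0x33dd619b, 0x10e012e8,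
   0x95fbe13d, 0x70a035be, 0x2244c7fb, 0x228873c4, 0x124d956e, 0x10a0817a, 0x95fbf26d, 0xf44a46bd,
   0x7090d2be, 0x2090c1ad, 0x2299e184, 0x4090a589, 0x309077cc, 0x61e8d3c7, 0x1080266c, 0x5090136c,
   0x6090f46c, 0xa2f5a6fc, 0x8128b6ca, 0xa589174f, 0x228834df, 0x114472b9, 0x1122b669, 0x102077aa,
   0x6688b72c, 0x205033ee, 0x228897fe, 0x9769e3db, 0x3040e759, 0x52149769, 0x6112b648, 0x124d9769,
   0x135982fe, 0x106044ee, 0x1144d33c, 0x61fa9769, 0x6699e13d, 0x669984ae, 0x6699c7bd, 0x7788266c,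
   0x66992182, 0x408066ff, 0x22dd61c4, 0x669973c4, 0x10c055aa, 0x669995fb, 0x6699619b]
  (by decide +kernel) (by decide +kernel) (by decide +kernel)

theorem le_minBaerCount_derivedSemifield : 8 ≤ derivedSemifield.minBaerCount 4 :=
  SpreadSet.le_minBaerCount_of_words
  [0x5248564d, 0x3355325b, 0x376a615f, 0x34596335, 0x516e325b, 0x315e526b, 0x3050516e, 0x11661469,
   0x11889316, 0xa78aa289, 0x32a8933c, 0x9224b79c, 0xb32c94ba, 0x81b6b439, 0x2090b52d, 0x91be2397,
   0x2299269a, 0xa419a11b, 0x70b0c278, 0x4080438a, 0x4488c14f, 0x64a9c56b, 0x41c6c28f, 0x814e864b,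
   0x70a0a2d6, 0x10c012c9, 0xb5db61b7, 0xa7dbd57d, 0x13dcd1c7, 0x77aad17e, 0x75aba1d9, 0xa57971df,
   0x44aae74f, 0x6080e36f, 0x71e69478, 0xe4c9c126, 0xa5eba2e8, 0x10e0a77c, 0x50a01166, 0x50a0437c,
   0x50a0b5db, 0x50a081b6, 0x50a0c126, 0x174be639, 0x50906189, 0x409022aa, 0xf218955e, 0x437cd55b,
   0x247961b7, 0x70b0329a, 0xb5dbc39c, 0x44998137, 0x12982479, 0x1166f3bc, 0x1020f34f, 0xe4c9f34f,
   0x2288f34f, 0xf3bc152b, 0x5588c132, 0x4090245d, 0xd55b933c, 0x2288433f, 0xb32c3176, 0xb5db329a,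
   0x70b044dd, 0x81b6c39c, 0x6080152b, 0x22881469, 0x1166e42d, 0x13dcf54b, 0x1298c1e7, 0x37eb91f5,
   0x608051f6, 0x70b051f6, 0x43b5148e, 0x51f6147d, 0x449951a7, 0x51f613dc, 0x102051a7, 0x40901166,
   0x5198743e, 0xa56a8638, 0x208077bb, 0xf218f71b, 0xf3bcf5be, 0x50a051a7, 0x92f8732f, 0x81f8e2cd,
   0x70b022aa, 0xe4c992f8, 0x92f8c1e7, 0x102092f8, 0x92f8153e, 0x81f8c315, 0x55bb437c, 0x608044dd,
   0xe395b4ae, 0x75abe38c, 0x2288b56e, 0x1166d55b, 0x1298a54e, 0x4090147d, 0x77bb148e, 0x55bb422a,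
   0x6080329a, 0x3040e48a, 0x3459d228, 0x70b0128a, 0x1166a5eb, 0x437c54ed, 0x55bb147d, 0x85fb64cd,
   0xc39c85fb, 0xe4c932a8, 0x4499c1e7, 0x13dca24a, 0x1020b56e, 0x409055bb, 0xf31416ed, 0x70b0933c,
   0x41c6a4bd, 0xa5eb9186, 0x1166329a, 0x55bb128a, 0x135d976b, 0x13f8e217, 0xd22823fc, 0x74894268,
   0x7489e238, 0x4090e42d, 0xa5eb74fd, 0x10204499, 0x60b0122d, 0x12e415e8, 0x748985fb, 0x922473da,
   0x2479e238, 0xe4c98137, 0x437cc126, 0xa2e8d1c7, 0x70b0a5eb, 0x228813cf, 0x102055ee, 0x608033cc,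
   0x409033cc, 0x33cc61d6, 0x33ccd55b, 0x33ccb5db, 0x33cca5eb, 0x33cc128a, 0x11eed5a8, 0x10e011ee]
  (by decide +kernel) (by decide +kernel) (by decide +kernel)

theorem le_minBaerCount_lorimerRahilly : 7 ≤ lorimerRahilly.minBaerCount 4 :=
  SpreadSet.le_minBaerCount_of_words
  [0x1122172d, 0x13283215, 0x122c2337, 0x10201629, 0x2314163f, 0x122c1328, 0x63296124, 0x437d374b,
   0x87b8368c, 0xb79b23bd, 0x10a016ae, 0xa5ca61a6, 0xc569a1cb, 0xa5cac168, 0x66aa63ae, 0x60a063ae,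
   0x418487cd, 0xc56963ae, 0x87dbd15e, 0xd66963b8, 0x508087db, 0x558887db, 0xd58a8658, 0x8658875c,
   0x709091e4, 0xe69be29e, 0x91e4e778, 0x50b0b4ec, 0x977a937f, 0x40a044aa, 0x91e4e379, 0x77997398,
   0x10e082a6, 0x60901122, 0x70803215, 0x20d04219, 0x40b022aa, 0x50a032ec, 0x50a022cc, 0x30c082df,
   0x108061a6, 0xa5ca133b, 0x5588123e, 0xc7184236, 0xe69bc5ac, 0x93ecf24a, 0x86589175, 0x558861a6,
   0x3050937f, 0x51d8977a, 0x77995284, 0x608043b7, 0x50b044cc, 0x40a0f4ca, 0x43f4d58a, 0x66aa43b7,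
   0x43f4c1a9, 0x51d8e29e, 0x1060a395, 0x1289c1bd, 0x122ca16a, 0x779982df, 0xc16887db, 0xf64b3227,
   0x122cf6bd, 0x10c0e67d, 0x10a0e63e, 0x1040e6ca, 0x1122c5ac, 0x51d8f6bd, 0x7799a5ca, 0x10e012e6,
   0x66aa133b, 0x1122e69b, 0x5599843b, 0xa5ca5284, 0x558893ec, 0x208077ee, 0xa16a243c, 0x33994518,
   0x209051d8, 0xa186e33c, 0x70b05588, 0x3080d7f8, 0x11cc42ba, 0x60b01328, 0x513e1384, 0x13c5a2eb,
   0x77aa4152, 0x20c0b4f9, 0xe27cb4f9, 0x432ce2d5, 0x11aa27de, 0x1328b44d, 0x122cd58a, 0x86f9f275,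
   0x4090a1cb, 0xa59be25f, 0x2040e379, 0x3040a56f, 0x3355e72e, 0xa589d6ed, 0x408097ed, 0x846993cb,
   0x15cb245d, 0x70a045be, 0x116624fb, 0x5284c168, 0x977a1629, 0x66aa5189, 0xf2cdc73c, 0xb4f945be,
   0x50b084ac, 0x2050c569, 0xe69bb549, 0x528463ae, 0x1040d67a, 0x1122977a, 0x5090e16d, 0x526973c6,
   0x3215b14c, 0xa5ca2314, 0x162973eb, 0xf229d3fd, 0x43f4f2b8, 0x40a0847a, 0x309041fe, 0xe69b41fe,
   0x558841bf, 0x66aa41bf, 0x41feb44d, 0x50a052ac, 0x30d044ff, 0x44bbe27c, 0x55aab789, 0x44bb86de,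
   0x44bbc569, 0x44bb5189, 0x33cc1558, 0x44bb123e, 0x44bbf24a]
  (by decide +kernel) (by decide +kernel) (by decide +kernel)

theorem le_minBaerCount_dempwolff : 4 ≤ dempwolff.minBaerCount 4 :=
  SpreadSet.le_minBaerCount_of_words
  [0x20402244, 0x672a632c, 0x3355516c, 0x645a6153, 0x3050673f, 0x276b2369, 0x7619711b, 0x1166126b,
   0x137d7267, 0x63751769, 0x84b8b23d, 0x8234b58d, 0x9126b49c, 0x20902299, 0x10a015a9, 0x13b8b1a7,
   0x97b896bc, 0xb12c2395, 0x11aab214, 0x27982194, 0x12ada1b6, 0x3388358a, 0x95c8c357, 0x5090519b,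
   0xc68ac285, 0x5599c65e, 0x4488458f, 0x408083ce, 0x52c59658, 0xd318d51a, 0x10c011cc, 0x13c514ca,
   0x70907296, 0x40a0e345, 0x41eae4a9, 0xd6eae43f, 0xd2e834df, 0x42ede7ae, 0x44aae14c, 0x30d033dd,
   0x779991ed, 0xa14ae2ac, 0xe1d4e2da, 0x60902288, 0x30c077aa, 0x4529f1ce, 0xc5b8f167, 0x97abe42a,
   0xc69834eb, 0xe1124529, 0xf34cd23a, 0xf3d4824a, 0x1279c34e, 0xd46b174a, 0x10a055cc, 0x52b896db,
   0x1384722a, 0x8358b1c4, 0x97eac48b, 0x3040e3f7, 0x6080c65e, 0x334451de, 0x10a0c53c, 0xc69813f9,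
   0xe14c2395, 0xf729d3f5, 0x52f951f7, 0xd479416e, 0x176921da, 0x20d0f12a, 0x358aa1fc, 0xb64ae28d,
   0x23fcf4d9, 0xf37982fc, 0x20c066dd, 0x416e15a9, 0x1235a169, 0xf589867b, 0x5599d67d, 0x528463fe,
   0x84f9f172, 0xa759a15d, 0x22dde39b, 0x205044ff, 0x508011ee, 0x70807788]
  (by decide +kernel) (by decide +kernel) (by decide +kernel)

theorem minBaerCount_hall_le : hall.minBaerCount 4 ≤ 20 :=
  SpreadSet.minBaerCount_le_of_card_quadParams (Nibble.decode 0x10) (by decide) (by decide +kernel)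

theorem minBaerCount_johnsonWalker_le : johnsonWalker.minBaerCount 4 ≤ 10 :=
  SpreadSet.minBaerCount_le_of_card_quadParams (Nibble.decode 0x20) (by decide) (by decide +kernel)

theorem minBaerCount_derivedSemifield_le : derivedSemifield.minBaerCount 4 ≤ 8 :=
  SpreadSet.minBaerCount_le_of_card_quadParams (Nibble.decode 0x41) (by decide) (by decide +kernel)

theorem minBaerCount_lorimerRahilly_le : lorimerRahilly.minBaerCount 4 ≤ 7 :=
  SpreadSet.minBaerCount_le_of_card_quadParams (Nibble.decode 0x20) (by decide) (by decide +kernel)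

theorem minBaerCount_dempwolff_le : dempwolff.minBaerCount 4 ≤ 6 :=
  SpreadSet.minBaerCount_le_of_card_quadParams (Nibble.decode 0x10) (by decide) (by decide +kernel)

theorem minBaerCount_semifieldKernelTwo_le : semifieldKernelTwo.minBaerCount 4 ≤ 3 :=
  SpreadSet.minBaerCount_le_of_card_quadParams (Nibble.decode 0x30) (by decide) (by decide +kernel)

end BaerSubgroupCounts

section FanoLines

open Coord SpreadSet

variable {P L : Type*}

namespace QuadrangleFigure

/-- The quadrangle of the figure shows that `l` is not a Fano line. -/
def Refutes (F : QuadrangleFigure P L) (I : P → L → Prop) (l : L) : Prop :=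
  F.HasDiagonalsOn I l ∧ ¬ I F.s F.xy

theorem Refutes.not_isFanoLine {F : QuadrangleFigure P L} {I : P → L → Prop} {l : L}
    (h : F.Refutes I l) : ¬ IsFanoLine I l := fun hl => h.2 (hl F h.1)

instance (I : P → L → Prop) [h : DecidableRel I] : DecidableRel (flip I) := fun l p => h p l

instance [DecidableEq P] (I : P → L → Prop) [DecidableRel I] (l : L)
    (F : QuadrangleFigure P L) : Decidable (F.Refutes I l) := by
  unfold Refutes HasDiagonalsOn
  infer_instance

end QuadrangleFigure

/-- The coordinates with code `n`: the code of `(x, y)` is that of the vector, the code of `(m)` is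
`256 + m` and all greater numbers are codes of `(∞)`. -/
def Coord.decode (n : ℕ) : Coord Nibble :=
  if n < 256 then affine (Nibble.decode n) else if n < 272 then single (Fin.ofNat 16 n) else infty

/-- The figure whose points and lines are coded by the thirteen triples of hexadecimal digits
of `n`. -/
def QuadrangleFigure.decode (n : ℕ) : QuadrangleFigure (Coord Nibble) (Coord Nibble) :=
  let c i := Coord.decode ((n >>> (12 * i)) % 0x1000)
  ⟨c 12, c 11, c 10, c 9, c 8, c 7, c 6, c 5, c 4, c 3, c 2, c 1, c 0⟩

variable {Q : SpreadSet Nibble}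

theorem eq_infty_of_figures (figures : List ℕ)
    (h : ∀ s, ∃ n ∈ figures, (QuadrangleFigure.decode n).Refutes Q.Incid (originLine s))
    (l : Coord Nibble) : IsFanoLine Q.Incid l → l = infty :=
  eq_infty_of_isFanoLine fun s => let ⟨_, _, hn⟩ := h s; hn.not_isFanoLine

theorem not_isFanoLine_flip_of_figures (figures : List ℕ)
    (h₀ : ∃ n ∈ figures, (QuadrangleFigure.decode n).Refutes (flip Q.Incid) (affine 0))
    (h : ∀ s, ∃ n ∈ figures, (QuadrangleFigure.decode n).Refutes (flip Q.Incid) (direction s))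
    (l : Coord Nibble) : ¬ IsFanoLine (flip Q.Incid) l :=
  not_isFanoLine_flip (let ⟨_, _, hn⟩ := h₀; hn.not_isFanoLine)
    (fun s => let ⟨_, _, hn⟩ := h s; hn.not_isFanoLine) l

theorem eq_infty_of_isFanoLine_semifieldKernelFour :
    ∀ l, IsFanoLine semifieldKernelFour.Incid l → l = infty := eq_infty_of_figures
  [0x0011100ab0120000100f010002001110103110a, 0x0011100c101200001106610002000110103110c,
   0x0011100f00100000120ab10000003110101110f, 0x0011100c001000001306710000002110101110c,
   0x0011100a00100000140ef10000005110101110a, 0x001110060010000015032100000041101011106,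
   0x0011100780120000160ac100020071101031107, 0x0011100d301200001703a10002006110103110d,
   0x00111005e0120000180bf100020091101031105, 0x0011100f50120000190e310002008110103110f,
   0x00111004001000001a0dc1000000b1101011104, 0x00111003001000001b0cd1000000a1101011103,
   0x00111006a01200001c04e1000200d1101031106, 0x0011100b901200001d0d81000200c110103110b,
   0x0011100e001000001e0451000000f110101110e, 0x0011100d001000001f0fe1000000e110101110d,
   0x0100f00ab0120000011100000200110311010e8]
  (by decide +kernel)

theorem eq_infty_of_isFanoLine_hall :
    ∀ l, IsFanoLine hall.Incid l → l = infty := eq_infty_of_figures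
  [0x0011100230120000100d0100020011101031102, 0x0011100310120000110bb100020001101031103,
   0x0011100d001000001202310000003110101110d, 0x0011100300100000130ba100000021101011103,
   0x0011100d301600001402d10006005110107110d, 0x0011100b401600001503a10006004110107110b,
   0x00111002d0140000160d3100040071101051102, 0x0011100b501400001703b10004006110105110b,
   0x001110040010000018032100000091101011104, 0x0011100500100000190fe100000081101011105,
   0x0011100e001000001a0cd1000000b110101110e, 0x0011100f001000001b0891000000a110101110f,
   0x0011100c001000001c0ef1000000d110101110c, 0x0011100b001000001d0dc1000000c110101110b,
   0x00111008001000001e0451000000f1101011108, 0x00111002001000001f0541000000e1101011102,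
   0x0100d00230120000011100000200110311010c8]
  (by decide +kernel)

theorem eq_infty_of_isFanoLine_johnsonWalker :
    ∀ l, IsFanoLine johnsonWalker.Incid l → l = infty := eq_infty_of_figures
  [0x0011100890120000100c0100020011101031108, 0x001110061012000011099100020001101031106,
   0x0011100c001000001208910000003110101110c, 0x001110060010000013098100000021101011106,
   0x0011100200100000140ef100000051101011102, 0x0011100800100000150fe100000041101011108,
   0x0011100e00100000160cd10000007110101110e, 0x0011100400100000170dc100000061101011104,
   0x001110070010000018023100000091101011107, 0x0011100d001000001903210000008110101110d,
   0x00111003e01200001a07e1000200b1101031103, 0x00111002c01200001b0e61000200a1101031102,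
   0x00111005001000001c0671000000d1101011105, 0x0011100f001000001d0761000000c110101110f,
   0x00111009001000001e0451000000f1101011109, 0x00111003001000001f0541000000e1101011103,
   0x0100c00890120000011100000200110311010af]
  (by decide +kernel)

theorem eq_infty_of_isFanoLine_derivedSemifield :
    ∀ l, IsFanoLine derivedSemifield.Incid l → l = infty := eq_infty_of_figures
  [0x001110098012000010080100020011101031109, 0x0011100510120000110dd100020001101031105,
   0x001110080010000012098100000031101011108, 0x0011100500100000130dc100000021101011105,
   0x001110060010000014032100000051101011106, 0x0011100c001000001508910000004110101110c,
   0x001110090010000016054100000071101011109, 0x0011100d00100000170cd10000006110101110d,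
   0x0011100300100000180ab100000091101011103, 0x001110040010000019076100000081101011104,
   0x0011100a001000001a0231000000b110101110a, 0x00111007001000001b0ba1000000a1101011107,
   0x0011100b001000001c0671000000d110101110b, 0x00111002001000001d0451000000c1101011102,
   0x0011100c901200001e0251000200f110103110c, 0x0011100a701200001f0361000200e110103110a,
   0x010080098012000001110000020011031101087]
  (by decide +kernel)

theorem eq_infty_of_isFanoLine_lorimerRahilly :
    ∀ l, IsFanoLine lorimerRahilly.Incid l → l = infty := eq_infty_of_figures
  [0x001110089012000010040100020011101031108, 0x0011100510120000110ff100020001101031105,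
   0x001110040010000012089100000031101011104, 0x0011100500100000130fe100000021101011105,
   0x0011100a001000001402310000005110101110a, 0x0011100c001000001503210000004110101110c,
   0x0011100d00100000160cd10000007110101110d, 0x0011100cc0110000170d110001006110100110c,
   0x0011100e001000001804510000009110101110e, 0x0011100600100000190ba100000081101011106,
   0x00111003001000001a0ab1000000b1101011103, 0x0011100b001000001b0541000000a110101110b,
   0x00111008001000001c0671000000d1101011108, 0x00111002001000001d0761000000c1101011102,
   0x00111007001000001e0ef1000000f1101011107, 0x0011100f001000001f0dc1000000e110101110f,
   0x0100400890120000011100000200110311010ac]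
  (by decide +kernel)

theorem eq_infty_of_isFanoLine_dempwolff :
    ∀ l, IsFanoLine dempwolff.Incid l → l = infty := eq_infty_of_figures
  [0x001110098012000010040100020011101031109, 0x0011100e10120000110aa10002000110103110e,
   0x001110040010000012098100000031101011104, 0x0011100e00100000130ab10000002110101110e,
   0x0011100f001000001404510000005110101110f, 0x001110050010000015067100000041101011105,
   0x0011100a00100000160fe10000007110101110a, 0x0011100b001000001702310000006110101110b,
   0x001110020010000018089100000091101011102, 0x001110090010000019076100000081101011109,
   0x00111007001000001a0321000000b1101011107, 0x00111006001000001b0ef1000000a1101011106,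
   0x0011100f901300001c05f1000300d110102110f, 0x00111005e01200001d0f81000200c1101031105,
   0x00111003001000001e0ba1000000f1101011103, 0x00111008001000001f0541000000e1101011108,
   0x0100400980120000011100000200110311010fb]
  (by decide +kernel)

theorem eq_infty_of_isFanoLine_semifieldKernelTwo :
    ∀ l, IsFanoLine semifieldKernelTwo.Incid l → l = infty := eq_infty_of_figures
  [0x0011100ba0120000100c010002001110103110b, 0x001110061012000011099100020001101031106,
   0x0011100c00100000120ba10000003110101110c, 0x001110060010000013098100000021101011106,
   0x0011100d001000001404510000005110101110d, 0x0011100500100000150ab100000041101011105,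
   0x001110030010000016089100000071101011103, 0x0011100a00100000170fe10000006110101110a,
   0x001110070010000018032100000091101011107, 0x0011100e00100000190dc10000008110101110e,
   0x00111002001000001a0cd1000000b1101011102, 0x00111004001000001b0ef1000000a1101011104,
   0x0011100f001000001c0761000000d110101110f, 0x00111009001000001d0541000000c1101011109,
   0x00111008001000001e0671000000f1101011108, 0x0011100b001000001f0231000000e110101110b,
   0x0100c00ba012000001110000020011031101054]
  (by decide +kernel)

theorem not_isFanoLine_flip_hall :
    ∀ l, ¬ IsFanoLine (flip hall.Incid) l := not_isFanoLine_flip_of_figures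
  [0x0010020ef021000010100100030011022001082, 0x0101000ef02100000100200003001100102200f,
   0x000100088021010011013000022010001030008, 0x000100034011020021022000023030001010004,
   0x00010004f0110300310330000ba0d000101000f, 0x0001000de0110400410440000980a000101000e,
   0x0001000740110500510550000ab090001010004, 0x0000800b301206006106800008a0700ec020018,
   0x0000a00df01207007107c0000ce0600b90200eb, 0x0001000f4011080081088000032050001010004,
   0x0001000530110900910990000fe040001010003, 0x00010009e0110a00a10aa0000cd0f000101000e,
   0x0001000cf0110b00b10bb0000890e000101000f, 0x00010003a0110c00c10cc0000ef0b000101000a,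
   0x0001000c40110d00d10dd0000dc0c0001010004, 0x0001000940110e00e10ee000045020001010004,
   0x0001000b90110f00f10ff000054080001010009, 0x00003002201210010110200000201001302004c]
  (by decide +kernel) (by decide +kernel)

theorem not_isFanoLine_flip_johnsonWalker :
    ∀ l, ¬ IsFanoLine (flip johnsonWalker.Incid) l := not_isFanoLine_flip_of_figures
  [0x00100f0ab0250000100301000a00110ff0c106f, 0x0100300ab02500000100f0000a00110c10ff026,
   0x000100033021010011016000088010001060003, 0x0001000ea01102002102200008906000101000a,
   0x00010007b0110300310330000980c000101000b, 0x00010006c0110400410440000ef08000101000c,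
   0x0001000d70110500510550000fe020001010007, 0x0001000930110600610660000cd040001010003,
   0x00010004f0110700710770000dc0e000101000f, 0x0001000fa0110800810880000230d000101000a,
   0x0001000cb01109009109900003207000101000b, 0x0000900c30120a00a10ad0000640b00ce0200d7,
   0x0000f00620140b00b10b70000d90a006204008e, 0x00010005e0110c00c10cc0000670f000101000e,
   0x0001000390110d00d10dd000076050001010009, 0x00010008b0110e00e10ee00004503000101000b,
   0x00010002b0110f00f10ff00005409000101000b, 0x00003002201210010110200000201001302008b]
  (by decide +kernel) (by decide +kernel)

theorem not_isFanoLine_flip_derivedSemifield :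
    ∀ l, ¬ IsFanoLine (flip derivedSemifield.Incid) l := not_isFanoLine_flip_of_figures
  [0x0010050ef0240000100d01000e00110550b10c5, 0x0100d00ef0240000010050000e00110b1055058,
   0x00006003302501001101b0000cc0100540b00fb, 0x0001000f3011020021022000098050001010003,
   0x0001000760110300310330000dc080001010006, 0x0001000860110400410440000320c0001010006,
   0x0001000d2011050051055000089060001010002, 0x0001000f70110600610660000540d0001010007,
   0x0001000320110700710770000cd090001010002, 0x00010003e0110800810880000ab04000101000e,
   0x0001000cd01109009109900007603000101000d, 0x0001000cb0210a00a10a20000b407000105000b,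
   0x0001000ae0110b00b10bb0000ba0a000101000e, 0x0001000980110c00c10cc000067020001010008,
   0x00010007e0110d00d10dd0000450b000101000e, 0x0000600260120e00e10e50000570f00b9020068,
   0x0000700c50120f00f10f900009b0e0064020038, 0x0000300220121001011020000020100130200a5]
  (by decide +kernel) (by decide +kernel)

theorem not_isFanoLine_flip_lorimerRahilly :
    ∀ l, ¬ IsFanoLine (flip lorimerRahilly.Incid) l := not_isFanoLine_flip_of_figures
  [0x001008032021000010100100050011088001078, 0x010100032021000001008000050011001088002,
   0x000100077021010011015000088010001050007, 0x0001000b4011020021022000089050001010004,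
   0x0001000850110300310330000fe040001010005, 0x0001000870110400410440000230c0001010007,
   0x0001000cf0110500510550000320a000101000f, 0x00010008a0110600610660000cd09000101000a,
   0x0001000fc0110700710770000980d000101000c, 0x0001000db01108008108800004506000101000b,
   0x0000600a701209009109f0000ce0e0075020029, 0x0001000bc0110a00a10aa0000ab0b000101000c,
   0x00010007a0110b00b10bb00005403000101000a, 0x0001000eb0110c00c10cc00006702000101000b,
   0x00010004a0110d00d10dd00007608000101000a, 0x0001000fa0110e00e10ee0000ef0f000101000a,
   0x00010003a0110f00f10ff0000dc07000101000a, 0x000030022012100101102000002010013020041]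
  (by decide +kernel) (by decide +kernel)

theorem not_isFanoLine_flip_dempwolff :
    ∀ l, ¬ IsFanoLine (flip dempwolff.Incid) l := not_isFanoLine_flip_of_figures
  [0x0010090540210000101001000e0011099001049, 0x0101000540210000010090000e0011001099004,
   0x00010008802101001101e0000990100010e0008, 0x0001000430110200210220000980e0001010003,
   0x00010007a0110300310330000ab04000101000a, 0x000100058011040041044000045050001010008,
   0x0001000390110500510550000670f0001010009, 0x0001000950110600610660000fe0b0001010005,
   0x0001000590110700710770000230a0001010009, 0x000100094011080081088000089090001010004,
   0x0001000e5011090091099000076020001010005, 0x00010003e0110a00a10aa00003206000101000e,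
   0x0001000e30110b00b10bb0000ef070001010003, 0x00006007f0120c00c10cb0000b90d007502002c,
   0x0000200f70140d00d10d60000620c00bf04004c, 0x00010006b0110e00e10ee0000ba08000101000b,
   0x00010008e0110f00f10ff00005403000101000e, 0x0000300220121001011020000020100130200d6]
  (by decide +kernel) (by decide +kernel)

end FanoLines

section Unitals

open SpreadSet

theorem IsCartesian.isUnital_plane {K : Type} [Finite K] [Nontrivial K] [AddCommGroup K]
    {mul : K → K → K} (h : IsCartesian mul) {q : ℕ} {U : Set (Coord K)} (hU : U.ncard = q ^ 3 + 1)
    (hline : ∀ l, (Coord.pointOn mul l ⁻¹' U).ncard = 1 ∨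
      (Coord.pointOn mul l ⁻¹' U).ncard = q + 1) : h.plane.IsUnital q U := by
  refine ⟨hU, fun (l : Coord K) => ?_⟩
  have points_eq : {p | Coord.Incid mul p l} = Set.range (Coord.pointOn mul l) :=
    Set.ext fun p => Coord.incid_iff_mem_range mul p l
  change (U ∩ {p | Coord.Incid mul p l}).ncard = 1 ∨ (U ∩ {p | Coord.Incid mul p l}).ncard = q + 1
  rw [points_eq, ← Set.image_preimage_eq_inter_range,
    Set.ncard_image_of_injective _ (Coord.pointOn_injective mul l)]
  exact hline l

/-- The position of a point in the list of the points `(x, y)` in lexicographic order, followed by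
the points `(m)` and `(∞)`. -/
def Coord.code : Coord Nibble → ℕ
  | pair x y => Nibble.code (x, y)
  | single m => 256 + m.val
  | infty => 272

/-- The set of the points whose codes are the positions of the ones in the binary digits of
`mask`. -/
def Coord.ofMask (mask : ℕ) : Set (Coord Nibble) := {p | mask.testBit p.code}

theorem IsCartesian.exists_isUnital_of_mask {mul : Nibble → Nibble → Nibble} (h : IsCartesian mul)
    (mask : ℕ) (hU : (Finset.univ.filter fun p : Coord Nibble => mask.testBit p.code).card = 65)
    (hline : ∀ l, (Finset.univ.filter fun t => mask.testBit (Coord.pointOn mul l t).code).card ∈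
      [1, 5]) : ∃ U, h.plane.IsUnital 4 U := by
  refine ⟨Coord.ofMask mask, h.isUnital_plane ?_ fun l => ?_⟩
  · simpa [Coord.ofMask, Set.ncard_eq_toFinset_card'] using hU
  · simpa [Coord.ofMask, Set.ncard_eq_toFinset_card'] using hline l

theorem exists_isUnital_semifieldKernelFour :
    ∃ U, semifieldKernelFour.isCartesian.plane.IsUnital 4 U :=
  IsCartesian.exists_isUnital_of_mask _
    0x8704102c58489000400404898205c0714100062125380410d14d0350826210100
    (by decide +kernel) (by decide +kernel)

theorem exists_isUnital_hall : ∃ U, hall.isCartesian.plane.IsUnital 4 U :=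
  IsCartesian.exists_isUnital_of_mask _
    0x14884060600c34884488400001221a00522883c00500a0909500a44113c0006062288
    (by decide +kernel) (by decide +kernel)

theorem exists_isUnital_johnsonWalker : ∃ U, johnsonWalker.isCartesian.plane.IsUnital 4 U :=
  IsCartesian.exists_isUnital_of_mask _
    0x88a60c88110d20800902a24327840000281c8608a0008d21032242a9002004078
    (by decide +kernel) (by decide +kernel)

theorem exists_isUnital_derivedSemifield : ∃ U, derivedSemifield.isCartesian.plane.IsUnital 4 U :=
  IsCartesian.exists_isUnital_of_mask _
    0x169000c30a8804098300c61200c30000085085090048aa12048889110590024419220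
    (by decide +kernel) (by decide +kernel)

theorem exists_isUnital_lorimerRahilly : ∃ U, lorimerRahilly.isCartesian.plane.IsUnital 4 U :=
  IsCartesian.exists_isUnital_of_mask _
    0x1000a29290a000101002892922811898911f08080f036020236008080000a31310a
    (by decide +kernel) (by decide +kernel)

theorem exists_isUnital_dempwolff : ∃ U, dempwolff.isCartesian.plane.IsUnital 4 U :=
  IsCartesian.exists_isUnital_of_mask _
    0x10000030c30c0030cc00c300cc03003c030030c030303c0c03003c0c0c003030c30c0
    (by decide +kernel) (by decide +kernel)

theorem exists_isUnital_semifieldKernelTwo :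
    ∃ U, semifieldKernelTwo.isCartesian.plane.IsUnital 4 U :=
  IsCartesian.exists_isUnital_of_mask _
    0x425222a44c80a0100804e494404000496a11151884c50200004d8688880008096
    (by decide +kernel) (by decide +kernel)

-- The mask encodes the Hermitian curve `y⁴ + y = x⁵` with its point `(∞)` at infinity.
theorem exists_isUnital_desarguesian :
    ∃ U, (ofDivisionRing Nibble).isCartesian.plane.IsUnital 4 U :=
  IsCartesian.exists_isUnital_of_mask _
    0x10000003cc3003c00003c3c00003cc300003c3c00c300c300c3003c003c00003c00c3
    (by decide +kernel) (by decide +kernel)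

theorem exists_isUnital_flip_hall : ∃ U, hall.isCartesian.flip.plane.IsUnital 4 U :=
  IsCartesian.exists_isUnital_of_mask _
    0x8008e01000424231815100040b25424c818010081610d42d4044942004010178170
    (by decide +kernel) (by decide +kernel)

theorem exists_isUnital_flip_johnsonWalker :
    ∃ U, johnsonWalker.isCartesian.flip.plane.IsUnital 4 U :=
  IsCartesian.exists_isUnital_of_mask _
    0x111220303842128828282148299002112990012840a05a0050cc000006600300c0505
    (by decide +kernel) (by decide +kernel)

theorem exists_isUnital_flip_derivedSemifield :
    ∃ U, derivedSemifield.isCartesian.flip.plane.IsUnital 4 U :=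
  IsCartesian.exists_isUnital_of_mask _
    0x200210b0002040048190100401d2c8400080d446188781088a104d244c221540247
    (by decide +kernel) (by decide +kernel)

theorem exists_isUnital_flip_lorimerRahilly :
    ∃ U, lorimerRahilly.isCartesian.flip.plane.IsUnital 4 U :=
  IsCartesian.exists_isUnital_of_mask _
    0x1300c00a582410069aa0090900a05c0300000066044110cc009900606c03048844444
    (by decide +kernel) (by decide +kernel)

theorem exists_isUnital_flip_dempwolff : ∃ U, dempwolff.isCartesian.flip.plane.IsUnital 4 U :=
  IsCartesian.exists_isUnital_of_mask _
    0x10000030cc00c030330c0c030c00c0c30c00c030303030c300c03030cc0300c030c30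
    (by decide +kernel) (by decide +kernel)

end Unitals

section ThirteenPlanes

open Coord

theorem SpreadSet.isEmpty_incidenceIso_of_minBaerCount_ne {K : Type*} [AddCommGroup K]
    [Nontrivial K] [Finite K] [Module (ZMod 2) K] {Q R : SpreadSet K} {q : ℕ}
    (hR : ∀ l, IsFanoLine R.Incid l → l = infty) (h : Q.minBaerCount q ≠ R.minBaerCount q) :
    IsEmpty (IncidenceIso Q.Incid R.Incid) where
  false e := h (minBaerCount_eq_of_incidenceIso e (hR _ (isFanoLine_infty.map e)) q)

/-- The non-Desarguesian spread sets, in decreasing order of their invariants `minBaerCount`. -/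
def tabulatedSpread : Fin 7 → SpreadSet Nibble :=
  ![semifieldKernelFour, hall, johnsonWalker, derivedSemifield, lorimerRahilly, dempwolff,
    semifieldKernelTwo]

theorem strictAnti_minBaerCount_tabulatedSpread :
    StrictAnti fun i => (tabulatedSpread i).minBaerCount 4 := by
  refine Fin.strictAnti_iff_succ_lt.mpr fun i => ?_
  fin_cases i
  · exact minBaerCount_hall_le.trans_lt le_minBaerCount_semifieldKernelFour
  · exact minBaerCount_johnsonWalker_le.trans_lt le_minBaerCount_hall
  · exact minBaerCount_derivedSemifield_le.trans_lt le_minBaerCount_johnsonWalker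
  · exact minBaerCount_lorimerRahilly_le.trans_lt le_minBaerCount_derivedSemifield
  · exact minBaerCount_dempwolff_le.trans_lt le_minBaerCount_lorimerRahilly
  · exact minBaerCount_semifieldKernelTwo_le.trans_lt le_minBaerCount_dempwolff

theorem eq_infty_of_isFanoLine_tabulatedSpread (i : Fin 7) :
    ∀ l, IsFanoLine (tabulatedSpread i).Incid l → l = infty := by
  fin_cases i
  exacts [eq_infty_of_isFanoLine_semifieldKernelFour, eq_infty_of_isFanoLine_hall,
    eq_infty_of_isFanoLine_johnsonWalker, eq_infty_of_isFanoLine_derivedSemifield,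
    eq_infty_of_isFanoLine_lorimerRahilly, eq_infty_of_isFanoLine_dempwolff,
    eq_infty_of_isFanoLine_semifieldKernelTwo]

/-- The spread sets of eight translation planes, the first of which is Desarguesian. -/
def spread : Fin 8 → SpreadSet Nibble := Fin.cons (.ofDivisionRing Nibble) tabulatedSpread

theorem isEmpty_incidenceIso_spread {i j : Fin 8} (hij : i ≠ j) :
    IsEmpty (IncidenceIso (spread i).Incid (spread j).Incid) := by
  have desarguesian (i : Fin 7) :
      IsEmpty (IncidenceIso (spread 0).Incid (tabulatedSpread i).Incid) :=
    SpreadSet.isEmpty_incidenceIso_ofDivisionRing (eq_infty_of_isFanoLine_tabulatedSpread i)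
  cases i using Fin.cases with
  | zero =>
    obtain ⟨j, rfl⟩ := Fin.exists_succ_eq.mpr hij.symm
    exact desarguesian j
  | succ i =>
    cases j using Fin.cases with
    | zero => exact ⟨fun e => (desarguesian i).false e.symm⟩
    | succ j =>
      exact SpreadSet.isEmpty_incidenceIso_of_minBaerCount_ne
        (eq_infty_of_isFanoLine_tabulatedSpread j)
        (strictAnti_minBaerCount_tabulatedSpread.injective.ne (by simpa using hij))

theorem exists_isUnital_spread (i : Fin 8) : ∃ U, (spread i).isCartesian.plane.IsUnital 4 U := by
  fin_cases i
  exacts [exists_isUnital_desarguesian, exists_isUnital_semifieldKernelFour, exists_isUnital_hall,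
    exists_isUnital_johnsonWalker, exists_isUnital_derivedSemifield, exists_isUnital_lorimerRahilly,
    exists_isUnital_dempwolff, exists_isUnital_semifieldKernelTwo]

/-- The position in `spread` of the translation planes whose duals contribute to the thirteen
planes; the other three are isomorphic to their duals. -/
def dualIndex (j : Fin 5) : Fin 8 := j.castAdd 1 |>.succ.succ

theorem not_isFanoLine_flip_dualIndex (j : Fin 5) :
    ∀ l, ¬ IsFanoLine (flip (spread (dualIndex j)).Incid) l := by
  fin_cases j
  exacts [not_isFanoLine_flip_hall, not_isFanoLine_flip_johnsonWalker,
    not_isFanoLine_flip_derivedSemifield, not_isFanoLine_flip_lorimerRahilly,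
    not_isFanoLine_flip_dempwolff]

theorem exists_isUnital_flip_dualIndex (j : Fin 5) :
    ∃ U, (spread (dualIndex j)).isCartesian.flip.plane.IsUnital 4 U := by
  fin_cases j
  exacts [exists_isUnital_flip_hall, exists_isUnital_flip_johnsonWalker,
    exists_isUnital_flip_derivedSemifield, exists_isUnital_flip_lorimerRahilly,
    exists_isUnital_flip_dempwolff]

/-- The eight translation planes, followed by five of their duals. -/
def planes : Fin 8 ⊕ Fin 5 → ProjPlane :=
  Sum.elim (fun i => (spread i).isCartesian.plane)
    fun j => (spread (dualIndex j)).isCartesian.flip.plane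

theorem planes_hasOrder (k : Fin 8 ⊕ Fin 5) : (planes k).HasOrder 16 := by
  have card_nibble : Nat.card Nibble = 16 := Nat.card_fin 16
  rw [← card_nibble]
  rcases k with i | j
  · exact (spread i).isCartesian.plane_hasOrder
  · exact (spread (dualIndex j)).isCartesian.flip.plane_hasOrder

theorem isEmpty_incidenceIso_planes {k k' : Fin 8 ⊕ Fin 5} (hk : k ≠ k') :
    IsEmpty (IncidenceIso (planes k).Incid (planes k').Incid) := by
  have incid_inr (j : Fin 5) :
      (planes (.inr j)).Incid = flip (spread (dualIndex j)).Incid := incid_flip _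
  have mixed (i : Fin 8) (j : Fin 5) :
      IsEmpty (IncidenceIso (spread i).Incid (planes (.inr j)).Incid) := by
    rw [incid_inr]
    exact ⟨fun e => not_isFanoLine_flip_dualIndex j _ (SpreadSet.isFanoLine_infty.map e)⟩
  rcases k with i | j <;> rcases k' with i' | j'
  · exact isEmpty_incidenceIso_spread (by simpa using hk)
  · exact mixed i j'
  · exact ⟨fun e => (mixed i' j).false e.symm⟩
  · rw [incid_inr, incid_inr]
    have hj : dualIndex j ≠ dualIndex j' := by
      simpa [dualIndex, Fin.ext_iff] using hk
    exact ⟨fun e => (isEmpty_incidenceIso_spread hj).false e.dual⟩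

theorem exists_isUnital_planes (k : Fin 8 ⊕ Fin 5) : ∃ U, (planes k).IsUnital 4 U := by
  rcases k with i | j
  · exact exists_isUnital_spread i
  · exact exists_isUnital_flip_dualIndex j

end ThirteenPlanes

/-- There are 13 pairwise non-isomorphic projective planes of order 16, each of which
contains a unital. -/
theorem thirteen_planes_of_order_16_with_unitals :
    ∃ Pl : Fin 13 → ProjPlane,
      (∀ i, (Pl i).HasOrder 16) ∧
      (∀ i j, i ≠ j → ¬ PlaneIso (Pl i) (Pl j)) ∧
      (∀ i, ∃ U : Set (Pl i).Point, (Pl i).IsUnital 4 U) := by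
  refine ⟨fun k => planes (finSumFinEquiv.symm k), fun _ => planes_hasOrder _,
    fun k k' hk iso => ?_, fun _ => exists_isUnital_planes _⟩
  obtain ⟨e⟩ := iso.nonempty_incidenceIso (by decide) (planes_hasOrder _) (planes_hasOrder _)
  exact (isEmpty_incidenceIso_planes (finSumFinEquiv.symm.injective.ne hk)).false e
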